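/- For every n > 1, Σ_{T ∈ C_{n+1}} y^{impe(T)} (t+1)^{impp(T)} x^{deg_T(1)-1} z^{lead(T)-deg_T(1)-1} = Σ_{T ∈ O_{n+1}} y^{impe(T)+eld(T)} t^{eld(T)} x^{young_T(1)-1} z^{n-impe(T)-young_T(1)-eld(T)}, where the left sum is over Cayley trees of size n+1 rooted at 1 and the right sum is over planar trees of size n+1 rooted at 1. -/

import Mathlib

noncomputable section

open MvPolynomial Function

/-! ### The polynomial sequences -/

/-- The generalized Ramanujan polynomials `Q n`, in the variables
`x = X 0`, `y = X 1`, `z = X 2`, `t = X 3`: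
`Q 1 = 1` and `Q (n+1) = (x + n z + n (y+t)) Q n + (y+t) y ∂_y (Q n)` for `n ≥ 1`. -/
def Qpoly : ℕ → MvPolynomial (Fin 4) ℚ
  | 0 => 1
  | 1 => 1
  | n + 2 =>
      (X 0 + C ((n : ℚ) + 1) * X 2 + C ((n : ℚ) + 1) * (X 1 + X 3)) * Qpoly (n + 1)
        + (X 1 + X 3) * (X 1 * pderiv 1 (Qpoly (n + 1)))

/-- `R n (x,y,z,t) = Q n (x, y+1, z, t-1)`. -/
def Rpoly (n : ℕ) : MvPolynomial (Fin 4) ℚ :=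
  bind₁ (fun i : Fin 4 => if i = 1 then X 1 + 1 else if i = 3 then X 3 - 1 else X i) (Qpoly n)

/-- `H 1 = 1` and `H (n+1) = (2n-1+(n+1)y) H n + (1+y)^2 H n'` for `n ≥ 1`. -/
def Hpoly : ℕ → Polynomial ℚ
  | 0 => 1
  | 1 => 1
  | n + 2 =>
      (Polynomial.C (2 * (n : ℚ) + 1) + Polynomial.C ((n : ℚ) + 2) * Polynomial.X)
          * Hpoly (n + 1)
        + (1 + Polynomial.X) ^ 2 * Polynomial.derivative (Hpoly (n + 1))

/-- The Ramanujan polynomials, in the variables `x = X 0`, `y = X 1`: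
`P 1 = 1` and `P (n+1) = (x + n + n y) P n + y^2 ∂_y (P n)` for `n ≥ 1`. -/
def Ppoly : ℕ → MvPolynomial (Fin 2) ℚ
  | 0 => 1
  | 1 => 1
  | n + 2 =>
      (X 0 + C ((n : ℚ) + 1) * (1 + X 1)) * Ppoly (n + 1)
        + X 1 ^ 2 * pderiv 1 (Ppoly (n + 1))

/-- `C 1 = 1` and `C (n+1) = n (1+y) C n + y^2 C n'` for `n ≥ 1`. -/
def Cpoly : ℕ → Polynomial ℚ
  | 0 => 1
  | 1 => 1
  | n + 2 =>
      Polynomial.C ((n : ℚ) + 1) * (1 + Polynomial.X) * Cpoly (n + 1)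
        + Polynomial.X ^ 2 * Polynomial.derivative (Cpoly (n + 1))

/-! ### Cayley trees

A Cayley tree of size `n`, rooted at the vertex with label `1`, is encoded by its parent
function on `Fin n` (vertex `v` carries label `v+1`; the root is the vertex with value `0`).
The root is a fixed point and every vertex reaches the root by iterating the parent map. -/

def CayleyTree (n : ℕ) : Type :=
  {p : Fin n → Fin n //
    (∀ v, v.val = 0 → p v = v) ∧ ∀ v : Fin n, ∃ k, k < n ∧ (p^[k] v).val = 0}

noncomputable instance (n : ℕ) : Fintype (CayleyTree n) := by
  unfold CayleyTree; exact Fintype.ofFinite _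

namespace CayleyTree

variable {n : ℕ} (T : CayleyTree n)

/-- `Desc T v a` : `v` is a descendant of `a` (including `a` itself). -/
def Desc (v a : Fin n) : Prop := ∃ k, T.1^[k] v = a

/-- `β_T(a)` : the smallest label among the descendants of `a`, as a 0-based index. -/
def beta (a : Fin n) : ℕ := sInf {j : ℕ | ∃ v : Fin n, v.val = j ∧ T.Desc v a}

/-- The edge from `c` to its parent is improper: `λ(parent c) > β(c)`. -/
def ImproperEdge (c : Fin n) : Prop := c.val ≠ 0 ∧ T.beta c < (T.1 c).val

/-- The number of improper edges. -/
def impe : ℕ := {c : Fin n | T.ImproperEdge c}.ncard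

/-- `a` is an improper parent, i.e. `β_T(a) ≠ λ_T(a)`. -/
def ImproperParent (a : Fin n) : Prop := T.beta a ≠ a.val

/-- The number of improper parents. -/
def impp : ℕ := {a : Fin n | T.ImproperParent a}.ncard

/-- The degree of the root (= its number of children). -/
def degRoot : ℕ := {c : Fin n | c.val ≠ 0 ∧ (T.1 c).val = 0}.ncard

/-- The length of the greater ancestors path of `i` : the largest `k` such that all the
ancestors `p^[l] i`, `l ≤ k`, have a label `≥ λ(i)`. -/
def bapLen (i : Fin n) : ℕ := Nat.findGreatest (fun k => ∀ l ≤ k, i ≤ T.1^[l] i) n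

/-- `i` is a leading vertex: `β_T(a_p) = λ_T(i)` where `a_p` is the top of the greater
ancestors path of `i`. -/
def Leading (i : Fin n) : Prop := T.beta (T.1^[T.bapLen i] i) = i.val

/-- The number of leading vertices. -/
def lead : ℕ := {i : Fin n | T.Leading i}.ncard

end CayleyTree

/-! ### Greg trees

A Greg tree of size `n`, rooted at the vertex with label `1`, has labelled vertices `Fin n`
(vertex `Sum.inl v` carries label `v+1`) and unlabelled vertices `Fin m`, each of degree at
least `3`.  It is encoded by its parent function.  To make the encoding canonical, the
unlabelled vertices are required to be indexed in increasing order of the pair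
`(β, depth)` (this pair is distinct for distinct unlabelled vertices, so every abstract Greg
tree admits exactly one such encoding). -/

/-- The root: the labelled vertex with label `1` (value `0`). -/
def gregRoot {n m : ℕ} (v : Fin n ⊕ Fin m) : Prop := ∃ w : Fin n, w.val = 0 ∧ v = Sum.inl w

namespace GregRaw

variable {n m : ℕ} (p : Fin n ⊕ Fin m → Fin n ⊕ Fin m)

/-- `v` is a descendant of `a` (including `a` itself). -/
def Desc (v a : Fin n ⊕ Fin m) : Prop := ∃ k, p^[k] v = a

/-- `β(a)` : smallest label among the descendants of `a`, as a 0-based index. -/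
def beta (a : Fin n ⊕ Fin m) : ℕ :=
  sInf {j : ℕ | ∃ w : Fin n, w.val = j ∧ Desc p (Sum.inl w) a}

/-- Distance from `v` to the root. -/
def depth (v : Fin n ⊕ Fin m) : ℕ := sInf {k : ℕ | gregRoot (p^[k] v)}

/-- Sorting key for unlabelled vertices: the pair `(β, depth)` encoded as a number. -/
def key (u : Fin m) : ℕ := beta p (Sum.inr u) * (n + m + 1) + depth p (Sum.inr u)

/-- The set of children of a vertex. -/
def children (a : Fin n ⊕ Fin m) : Set (Fin n ⊕ Fin m) := {w | w ≠ a ∧ p w = a}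

end GregRaw

/-- The conditions making a parent function on `Fin n ⊕ Fin m` a (canonically encoded)
Greg tree: the root is a fixed point, every vertex reaches the root, every unlabelled
vertex has at least two children (hence, having also a parent, degree at least `3`),
and unlabelled vertices are indexed in increasing order of `(β, depth)`. -/
def GregCond (n m : ℕ) (p : Fin n ⊕ Fin m → Fin n ⊕ Fin m) : Prop :=
  (∀ v, gregRoot v → p v = v) ∧
  (∀ v, ∃ k, k < n + m ∧ gregRoot (p^[k] v)) ∧
  (∀ u : Fin m, 2 ≤ (GregRaw.children p (Sum.inr u)).ncard) ∧
  (∀ u w : Fin m, u < w ↔ GregRaw.key p u < GregRaw.key p w)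

/-- Greg trees of size `n` rooted at `1`.  (The number of unlabelled vertices of a Greg
tree with `n` labelled vertices is always at most `n`, so the bound `m ≤ n` does not
exclude any Greg tree.) -/
def GregTree (n : ℕ) : Type :=
  Σ m : Fin (n + 1), {p : Fin n ⊕ Fin m.val → Fin n ⊕ Fin m.val // GregCond n m.val p}

noncomputable instance (n : ℕ) : Fintype (GregTree n) := by
  unfold GregTree; exact Fintype.ofFinite _

namespace GregTree

variable {n : ℕ} (T : GregTree n)

/-- The number of unlabelled vertices. -/
def unl : ℕ := T.1.val

/-- `β_T`. -/
def beta (a : Fin n ⊕ Fin T.1.val) : ℕ := GregRaw.beta T.2.1 a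

/-- The labelled vertex `a` is an improper parent, i.e. `β_T(a) ≠ λ_T(a)`. -/
def ImproperParent (a : Fin n) : Prop := T.beta (Sum.inl a) ≠ a.val

/-- The number of improper parents. -/
def impp : ℕ := {a : Fin n | T.ImproperParent a}.ncard

/-- The degree of the root (= its number of children). -/
def degRoot : ℕ :=
  {w : Fin n ⊕ Fin T.1.val | ¬gregRoot w ∧ gregRoot (T.2.1 w)}.ncard

/-- The length of the greater ancestors path of the labelled vertex `i` : the largest `k`
such that all labelled vertices among the ancestors `p^[l] (inl i)`, `l ≤ k`, have a label
`≥ λ(i)`. -/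
def bapLen (i : Fin n) : ℕ :=
  Nat.findGreatest
    (fun k => ∀ l ≤ k, ∀ j : Fin n, T.2.1^[l] (Sum.inl i) = Sum.inl j → i ≤ j)
    (n + T.1.val)

/-- The labelled vertex `i` is a leading vertex. -/
def Leading (i : Fin n) : Prop := T.beta (T.2.1^[T.bapLen i] (Sum.inl i)) = i.val

/-- The number of leading vertices. -/
def lead : ℕ := {i : Fin n | T.Leading i}.ncard

end GregTree

/-! ### Planar trees

A planar tree of size `n` rooted at `1` is encoded by a parent function together with a
rank function giving each non-root vertex its position (from the left, starting at `0`)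
among the children of its parent; ranks of the children of a fixed vertex form an initial
segment of `ℕ`, so the encoding is canonical. -/

def PlanarTree (n : ℕ) : Type :=
  {pr : (Fin n → Fin n) × (Fin n → Fin n) //
    (∀ v, v.val = 0 → pr.1 v = v) ∧
    (∀ v : Fin n, ∃ k, k < n ∧ (pr.1^[k] v).val = 0) ∧
    (∀ v, v.val = 0 → (pr.2 v).val = 0) ∧
    (∀ c d, c.val ≠ 0 → d.val ≠ 0 → pr.1 c = pr.1 d → pr.2 c = pr.2 d → c = d) ∧
    (∀ c, c.val ≠ 0 → ∀ s : Fin n, s < pr.2 c →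
      ∃ d, d.val ≠ 0 ∧ pr.1 d = pr.1 c ∧ pr.2 d = s)}

noncomputable instance (n : ℕ) : Fintype (PlanarTree n) := by
  unfold PlanarTree; exact Fintype.ofFinite _

namespace PlanarTree

variable {n : ℕ} (T : PlanarTree n)

/-- `β_T(a)` : the smallest label among the descendants of `a`, as a 0-based index. -/
def beta (a : Fin n) : ℕ := sInf {j : ℕ | ∃ v : Fin n, v.val = j ∧ ∃ k, T.1.1^[k] v = a}

/-- `j` is elder: it has a brother to its right with a smaller `β`. -/
def Elder (j : Fin n) : Prop :=
  j.val ≠ 0 ∧ ∃ k : Fin n, k.val ≠ 0 ∧ T.1.1 k = T.1.1 j ∧ T.1.2 j < T.1.2 k ∧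
    T.beta k < T.beta j

/-- The number of elder vertices. -/
def eld : ℕ := {j : Fin n | T.Elder j}.ncard

/-- The edge from `c` to its parent is improper: `c` is a younger child and
`λ(parent c) > β(c)`. -/
def ImproperEdge (c : Fin n) : Prop := c.val ≠ 0 ∧ ¬T.Elder c ∧ T.beta c < (T.1.1 c).val

/-- The number of improper edges. -/
def impe : ℕ := {c : Fin n | T.ImproperEdge c}.ncard

/-- `young_T(i)` : the number of younger children of `i`. -/
def young (i : Fin n) : ℕ := {c : Fin n | c.val ≠ 0 ∧ T.1.1 c = i ∧ ¬T.Elder c}.ncard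

/-- `young_T(1)` : the number of younger children of the root. -/
def youngRoot : ℕ := {c : Fin n | c.val ≠ 0 ∧ (T.1.1 c).val = 0 ∧ ¬T.Elder c}.ncard

end PlanarTree

/-!
After multiplication by `x`, both sides become weighted sums over the Cayley trees on `{0, …, m}`.
Let `W_m(x, a, b, z)` be the sum of the products of edge weights, where an edge `(i, j)` weighs `x`
if `i` is the root, and otherwise `z` if it is proper, `a` if it is improper with `β(i) = β(j)`, and
`b` if it is improper with `β(i) < β(j)`.

* Every improper parent has exactly one improper child with the same `β`, and there are as many
  non-leading vertices as improper edges. So the Cayley side is `W_m(x, y (t + 1), y, z)`.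
* The orders of the children in a planar tree amount to their inversion codes, i.e. to an arbitrary
  choice, for each `j`, of a number between `0` and the number of siblings with a smaller `β`; the
  elder vertices are those with a nonzero code. A nonzero code of `j` can be traded for moving `j`
  below one of these siblings, which does not change `β` and turns the edge above `j` into one with
  `β(i) < β(j)`. So the planar side is `W_m(x, y, y (t + 1), z + y t)`.
* Generating the trees by insertion of the largest label gives
  `W_{m+1} = (x + m (z + a)) W_m + a b D W_m`, where `D` is the derivation with `D a = D b = 1` and
  `D x = D z = 0`. This recurrence is invariant under exchanging `a` and `b` while keeping `z + a`,
  that is, under `(a, b, z) ↦ (b, a, z + a - b)`, which relates the two specialisations.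
-/

open Finset

namespace LabelledTree

section Reaches

variable {p q h : ℕ → ℕ} {v a b : ℕ}

/-- `Reaches p v a` says that `v` is a descendant of `a` (possibly `a` itself) for the parent
map `p`. -/
def Reaches (p : ℕ → ℕ) (v a : ℕ) : Prop := ∃ k, p^[k] v = a

lemma Reaches.refl (p : ℕ → ℕ) (v : ℕ) : Reaches p v v := ⟨0, rfl⟩

lemma reaches_map (p : ℕ → ℕ) (v : ℕ) : Reaches p v (p v) := ⟨1, rfl⟩

lemma Reaches.trans (hva : Reaches p v a) (hab : Reaches p a b) : Reaches p v b := by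
  obtain ⟨k, rfl⟩ := hva
  obtain ⟨l, rfl⟩ := hab
  exact ⟨l + k, iterate_add_apply p l k v⟩

lemma Reaches.of_map (hva : Reaches p (p v) a) : Reaches p v a :=
  (reaches_map p v).trans hva

lemma Reaches.eq_or_map (hva : Reaches p v a) : v = a ∨ Reaches p (p v) a := by
  obtain ⟨k, hk⟩ := hva
  cases k with
  | zero => exact .inl hk
  | succ k => exact .inr ⟨k, hk⟩

lemma Reaches.total (hva : Reaches p v a) (hvb : Reaches p v b) :
    Reaches p a b ∨ Reaches p b a := by
  obtain ⟨k, rfl⟩ := hva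
  obtain ⟨l, rfl⟩ := hvb
  rcases le_total k l with hkl | hlk
  · exact .inl ⟨l - k, by rw [← iterate_add_apply, Nat.sub_add_cancel hkl]⟩
  · exact .inr ⟨k - l, by rw [← iterate_add_apply, Nat.sub_add_cancel hlk]⟩

lemma reaches_map_zero_iff (hq : q 0 = 0) : Reaches q (q v) 0 ↔ Reaches q v 0 := by
  refine ⟨Reaches.of_map, fun hv => hv.eq_or_map.elim ?_ id⟩
  rintro rfl
  rw [hq]
  exact .refl q 0

lemma Reaches.map_of_forall (hstep : ∀ v, Reaches q (h v) (h (p v))) (hva : Reaches p v a) :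
    Reaches q (h v) (h a) := by
  obtain ⟨k, rfl⟩ := hva
  induction k with
  | zero => exact .refl q (h v)
  | succ k ih =>
    rw [iterate_succ_apply']
    exact ih.trans (hstep _)

lemma Reaches.le_of_forall_map_le {g : ℕ → ℕ} (hg : ∀ v, g (p v) ≤ g v) (hva : Reaches p v a) :
    g a ≤ g v := by
  obtain ⟨k, rfl⟩ := hva
  induction k with
  | zero => exact le_rfl
  | succ k ih =>
    rw [iterate_succ_apply']
    exact (hg _).trans ih

end Reaches

section MinDesc

variable {p q g : ℕ → ℕ} {v a : ℕ}

/-- The smallest label `β(a)` of a descendant of `a`, for the parent map `p`. -/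
def minDesc (p : ℕ → ℕ) (a : ℕ) : ℕ := sInf {v | Reaches p v a}

lemma reaches_minDesc (p : ℕ → ℕ) (a : ℕ) : Reaches p (minDesc p a) a :=
  Nat.sInf_mem (s := {v | Reaches p v a}) ⟨a, .refl p a⟩

lemma minDesc_le_of_reaches (hva : Reaches p v a) : minDesc p a ≤ v := Nat.sInf_le hva

lemma minDesc_le (p : ℕ → ℕ) (a : ℕ) : minDesc p a ≤ a := minDesc_le_of_reaches (.refl p a)

lemma minDesc_anti (hva : Reaches p v a) : minDesc p a ≤ minDesc p v :=
  minDesc_le_of_reaches ((reaches_minDesc p v).trans hva)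

lemma minDesc_map_le (p : ℕ → ℕ) (v : ℕ) : minDesc p (p v) ≤ minDesc p v :=
  minDesc_anti (reaches_map p v)

lemma minDesc_zero (p : ℕ → ℕ) : minDesc p 0 = 0 := Nat.le_zero.1 (minDesc_le p 0)

lemma minDesc_eq_self_of_forall_map_ne (hv : ∀ w, p w ≠ v) : minDesc p v = v := by
  obtain ⟨k, hk⟩ := reaches_minDesc p v
  cases k with
  | zero => exact hk
  | succ k => exact absurd ((iterate_succ_apply' p k _).symm.trans hk) (hv _)

lemma minDesc_eq_of_forall (hle : ∀ v, g v ≤ v) (hmap : ∀ v, g (q v) ≤ g v)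
    (hreach : ∀ a, Reaches q (g a) a) : minDesc q = g := by
  funext a
  refine le_antisymm (minDesc_le_of_reaches (hreach a)) ?_
  exact ((reaches_minDesc q a).le_of_forall_map_le hmap).trans (hle _)

lemma reaches_minDesc_of_forall
    (hstep : ∀ v, minDesc p (p v) = minDesc p v → q v = p v) (a : ℕ) :
    Reaches q (minDesc p a) a := by
  obtain ⟨k, hk⟩ := reaches_minDesc p a
  induction k generalizing a with
  | zero =>
    rw [iterate_zero_apply] at hk
    rw [hk]
    exact .refl q a
  | succ k ih =>
    rw [iterate_succ_apply'] at hk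
    set b := p^[k] (minDesc p a) with hb
    have hba : minDesc p b = minDesc p a :=
      le_antisymm (minDesc_le_of_reaches ⟨k, hb.symm⟩) (hk ▸ minDesc_map_le p b)
    have hqb : q b = a := (hstep b (by rw [hk, hba])).trans hk
    rw [← hba]
    exact (ih b (by rw [hba])).trans ⟨1, hqb⟩

lemma minDesc_congr (hle : ∀ v, minDesc p (q v) ≤ minDesc p v)
    (hstep : ∀ v, minDesc p (p v) = minDesc p v → q v = p v) : minDesc q = minDesc p :=
  minDesc_eq_of_forall (minDesc_le p) hle (reaches_minDesc_of_forall hstep)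

end MinDesc

/-- Parent maps of trees with root `0` on the vertex set `ℕ`. A finite tree is encoded by
attaching all the unused vertices to the root, see `IsTreeOn`. -/
structure IsTree (p : ℕ → ℕ) : Prop where
  map_zero : p 0 = 0
  reaches_zero : ∀ v, Reaches p v 0

namespace IsTree

variable {p : ℕ → ℕ} {u v c d N : ℕ}

@[elab_as_elim]
lemma induction {P : ℕ → Prop} (hp : IsTree p) (zero : P 0)
    (map : ∀ v, v ≠ 0 → P (p v) → P v) (v : ℕ) : P v := by
  obtain ⟨k, hk⟩ := hp.reaches_zero v
  induction k generalizing v with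
  | zero =>
    obtain rfl : v = 0 := hk
    exact zero
  | succ k ih =>
    by_cases hv : v = 0
    · exact hv ▸ zero
    · exact map v hv (ih (p v) hk)

lemma eq_zero_of_reaches_zero (hp : IsTree p) (hv : Reaches p 0 v) : v = 0 := by
  obtain ⟨k, rfl⟩ := hv
  exact iterate_fixed hp.map_zero k

lemma eq_zero_of_reaches_self (hp : IsTree p) (hv : Reaches p (p v) v) : v = 0 := by
  induction v using hp.induction with
  | zero => rfl
  | map v _ ih =>
    have hpv : p v = 0 := ih (hv.map_of_forall (h := p) fun w => reaches_map p (p w))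
    rw [hpv] at hv
    exact hp.eq_zero_of_reaches_zero hv

lemma map_ne_self (hp : IsTree p) (hv : v ≠ 0) : p v ≠ v := fun hpv =>
  hv (hp.eq_zero_of_reaches_self (hpv.symm ▸ .refl p v))

lemma minDesc_pos (hp : IsTree p) (hv : v ≠ 0) : 0 < minDesc p v := by
  refine Nat.pos_of_ne_zero fun h0 => hv (hp.eq_zero_of_reaches_zero ?_)
  exact h0 ▸ reaches_minDesc p v

lemma eq_of_reaches_of_map_eq (hp : IsTree p) (hc : c ≠ 0) (hd : d ≠ 0) (hcd : p c = p d)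
    (huc : Reaches p u c) (hud : Reaches p u d) : c = d := by
  have key : ∀ {c d}, d ≠ 0 → p c = p d → Reaches p c d → c = d := fun hd hcd hr =>
    hr.eq_or_map.resolve_right fun hr' => hd (hp.eq_zero_of_reaches_self (hcd ▸ hr'))
  exact (huc.total hud).elim (key hd hcd) fun hr => (key hc hcd.symm hr).symm

lemma eq_of_minDesc_eq (hp : IsTree p) (hc : c ≠ 0) (hd : d ≠ 0) (hcd : p c = p d)
    (hmin : minDesc p c = minDesc p d) : c = d :=
  hp.eq_of_reaches_of_map_eq hc hd hcd (reaches_minDesc p c) (hmin ▸ reaches_minDesc p d)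

lemma exists_child_minDesc_eq (hp : IsTree p) (hv : minDesc p v ≠ v) :
    ∃ c, c ≠ 0 ∧ p c = v ∧ minDesc p c = minDesc p v := by
  obtain ⟨k, hk⟩ := reaches_minDesc p v
  cases k with
  | zero => exact absurd hk hv
  | succ k =>
    rw [iterate_succ_apply'] at hk
    set c := p^[k] (minDesc p v) with hc
    refine ⟨c, ?_, hk, le_antisymm (minDesc_le_of_reaches ⟨k, hc.symm⟩) (hk ▸ minDesc_map_le p c)⟩
    intro hc0
    rw [hc0, hp.map_zero] at hk
    exact hv (hk ▸ minDesc_zero p)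

lemma minDesc_ne_self_iff (hp : IsTree p) :
    minDesc p v ≠ v ↔ ∃ c, c ≠ 0 ∧ p c = v ∧ minDesc p c < v := by
  constructor
  · intro hv
    obtain ⟨c, hc0, hcv, hc⟩ := hp.exists_child_minDesc_eq hv
    exact ⟨c, hc0, hcv, hc ▸ (minDesc_le p v).lt_of_ne hv⟩
  · rintro ⟨c, -, rfl, hc⟩
    exact ((minDesc_map_le p c).trans_lt hc).ne

lemma minDesc_lt_map_of_eq (hp : IsTree p) (hc : c ≠ 0) (h : minDesc p (p c) = minDesc p c) :
    minDesc p c < p c := by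
  refine (h ▸ minDesc_le p (p c)).lt_of_ne fun hpc => hc (hp.eq_zero_of_reaches_self ?_)
  exact hpc ▸ reaches_minDesc p c

lemma update_leaf (hp : IsTree p) (hN : N ≠ 0) (hleaf : ∀ w, p w ≠ N) (hvN : v ≠ N) :
    IsTree (update p N v) := by
  have reach : ∀ w, w ≠ N → Reaches (update p N v) w 0 := by
    intro w
    induction w using hp.induction with
    | zero => exact fun _ => .refl _ 0
    | map w _ ih =>
      intro hw
      refine Reaches.of_map ?_
      rw [update_of_ne hw]
      exact ih (hleaf w)
  refine ⟨by rw [update_of_ne hN.symm, hp.map_zero], fun w => ?_⟩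
  by_cases hw : w = N
  · refine Reaches.of_map ?_
    rw [hw, update_self]
    exact reach v hvN
  · exact reach w hw

end IsTree

lemma minDesc_update_leaf {p : ℕ → ℕ} {v N : ℕ} (hleaf : ∀ w, p w ≠ N) (hpN : p N < N)
    (hvN : v < N) : minDesc (update p N v) = minDesc p := by
  have hN : minDesc p N = N := minDesc_eq_self_of_forall_map_ne hleaf
  refine minDesc_congr (fun w => ?_) fun w hw => ?_
  · by_cases hwN : w = N
    · rw [hwN, update_self, hN]
      exact (minDesc_le p v).trans hvN.le
    · rw [update_of_ne hwN]
      exact minDesc_map_le p w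
  · refine update_of_ne ?_ v p
    rintro rfl
    exact (((minDesc_le p (p w)).trans_lt hpN).ne (hw.trans hN))

/-- Parent maps of trees with root `0` on the vertex set `{0, …, m}`; they are normalised by sending
every `v > m` to the root. -/
structure IsTreeOn (m : ℕ) (p : ℕ → ℕ) : Prop extends IsTree p where
  le : ∀ v, p v ≤ m
  map_eq_zero : ∀ v, m < v → p v = 0

namespace IsTreeOn

variable {m : ℕ} {p : ℕ → ℕ} {v c : ℕ}

lemma ne_of_lt (hp : IsTreeOn m p) (hv : m < v) (w : ℕ) : p w ≠ v := ((hp.le w).trans_lt hv).ne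

lemma le_of_map_ne_zero (hp : IsTreeOn m p) (hc : p c ≠ 0) : c ≤ m :=
  not_lt.1 fun h => hc (hp.map_eq_zero c h)

lemma minDesc_of_lt (hp : IsTreeOn m p) (hv : m < v) : minDesc p v = v :=
  minDesc_eq_self_of_forall_map_ne (hp.ne_of_lt hv)

open scoped Classical in
lemma exists_iterate_eq_zero (hp : IsTreeOn m p) (hv : v ≤ m) : ∃ k < m + 1, p^[k] v = 0 := by
  suffices h : ∃ k ≤ #{a ∈ Icc 1 m | Reaches p v a}, p^[k] v = 0 by
    obtain ⟨k, hk, hkv⟩ := h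
    refine ⟨k, Nat.lt_succ_of_le (hk.trans ((card_filter_le _ _).trans ?_)), hkv⟩
    rw [Nat.card_Icc, Nat.add_sub_cancel]
  induction v using hp.induction with
  | zero => exact ⟨0, Nat.zero_le _, rfl⟩
  | map v hv0 ih =>
    obtain ⟨k, hk, hkv⟩ := ih (hp.le v)
    refine ⟨k + 1, Nat.succ_le_of_lt (hk.trans_lt (card_lt_card ?_)), hkv⟩
    rw [ssubset_iff_of_subset (monotone_filter_right _ fun a _ ha => Reaches.of_map ha)]
    refine ⟨v, ?_, fun hv' => hv0 (hp.eq_zero_of_reaches_self (mem_filter.1 hv').2)⟩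
    exact mem_filter.2 ⟨mem_Icc.2 ⟨Nat.one_le_iff_ne_zero.2 hv0, hv⟩, .refl p v⟩

end IsTreeOn

section NatMap

variable {m : ℕ} {f g : Fin (m + 1) → Fin (m + 1)}

/-- The extension by `0` of a self-map of `{0, …, m}` to a self-map of `ℕ`. -/
def natMap (f : Fin (m + 1) → Fin (m + 1)) (v : ℕ) : ℕ := if h : v < m + 1 then f ⟨v, h⟩ else 0

lemma natMap_val (f : Fin (m + 1) → Fin (m + 1)) (v : Fin (m + 1)) : natMap f v = f v :=
  dif_pos v.2

lemma natMap_le (f : Fin (m + 1) → Fin (m + 1)) (v : ℕ) : natMap f v ≤ m := by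
  unfold natMap
  split_ifs <;> omega

lemma natMap_eq_zero (f : Fin (m + 1) → Fin (m + 1)) {v : ℕ} (hv : m < v) : natMap f v = 0 :=
  dif_neg (by omega)

lemma natMap_injective : Injective (natMap : (Fin (m + 1) → Fin (m + 1)) → ℕ → ℕ) :=
  fun f g hfg => funext fun v => Fin.ext (by rw [← natMap_val, ← natMap_val, hfg])

lemma exists_natMap_eq {p : ℕ → ℕ} (hle : ∀ v, p v ≤ m) (hlt : ∀ v, m < v → p v = 0) :
    ∃ f : Fin (m + 1) → Fin (m + 1), natMap f = p := by
  refine ⟨fun v => ⟨p v, Nat.lt_succ_of_le (hle v)⟩, funext fun v => ?_⟩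
  unfold natMap
  split_ifs with hv
  · rfl
  · exact (hlt v (by omega)).symm

lemma natMap_iterate_val (f : Fin (m + 1) → Fin (m + 1)) (k : ℕ) (v : Fin (m + 1)) :
    (natMap f)^[k] v = (f^[k] v : Fin (m + 1)) := by
  induction k with
  | zero => rfl
  | succ k ih => rw [iterate_succ_apply', iterate_succ_apply', ih, natMap_val]

lemma isTreeOn_natMap_iff : IsTreeOn m (natMap f) ↔
    (∀ v, v.val = 0 → f v = v) ∧ ∀ v, ∃ k, k < m + 1 ∧ (f^[k] v).val = 0 := by
  constructor
  · intro hf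
    refine ⟨fun v hv => Fin.ext ?_, fun v => ?_⟩
    · rw [← natMap_val, hv, hf.map_zero]
    · obtain ⟨k, hk, hkv⟩ := hf.exists_iterate_eq_zero (Nat.le_of_lt_succ v.2)
      exact ⟨k, hk, by rw [← natMap_iterate_val, hkv]⟩
  · rintro ⟨hzero, hreach⟩
    refine ⟨⟨?_, fun v => ?_⟩, natMap_le f, fun v => natMap_eq_zero f⟩
    · exact (natMap_val f 0).trans (by rw [hzero 0 rfl]; rfl)
    · rcases lt_or_ge v (m + 1) with hv | hv
      · obtain ⟨k, -, hk⟩ := hreach ⟨v, hv⟩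
        exact ⟨k, (natMap_iterate_val f k ⟨v, hv⟩).trans hk⟩
      · exact ⟨1, natMap_eq_zero f hv⟩

lemma sInf_descendants_eq_minDesc (f : Fin (m + 1) → Fin (m + 1)) (a : Fin (m + 1)) :
    sInf {j : ℕ | ∃ v : Fin (m + 1), v.val = j ∧ ∃ k, f^[k] v = a} = minDesc (natMap f) a := by
  apply le_antisymm
  · obtain ⟨k, hk⟩ := reaches_minDesc (natMap f) a
    have hlt : minDesc (natMap f) a < m + 1 := (minDesc_le _ _).trans_lt a.2
    refine Nat.sInf_le ⟨⟨_, hlt⟩, rfl, k, Fin.ext ?_⟩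
    exact (natMap_iterate_val f k ⟨_, hlt⟩).symm.trans hk
  · refine le_csInf ⟨a, a, rfl, 0, rfl⟩ ?_
    rintro _ ⟨v, rfl, k, hk⟩
    exact minDesc_le_of_reaches ⟨k, by rw [natMap_iterate_val, hk]⟩

lemma ncard_setOf_eq_card {s : Finset ℕ} {P : Fin (m + 1) → Prop} (hs : s ⊆ Icc 1 m)
    (hP : ∀ v, P v ↔ v.val ∈ s) : {v | P v}.ncard = #s := by
  rw [← Set.ncard_image_of_injective _ Fin.val_injective, ← Set.ncard_coe_finset]
  congr 1
  ext v
  simp only [Set.mem_image, Set.mem_ofPred_eq, mem_coe, hP]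
  refine ⟨?_, fun hv => ⟨⟨v, ?_⟩, hv, rfl⟩⟩
  · rintro ⟨c, hc, rfl⟩
    exact hc
  · exact Nat.lt_succ_of_le (mem_Icc.1 (hs hv)).2

end NatMap

/-- The finite set of all parent maps of trees on `{0, …, m}`. -/
def trees (m : ℕ) : Finset (ℕ → ℕ) :=
  univ.map ⟨fun T : CayleyTree (m + 1) => natMap T.1, natMap_injective.comp Subtype.val_injective⟩

@[simp]
lemma mem_trees {m : ℕ} {p : ℕ → ℕ} : p ∈ trees m ↔ IsTreeOn m p := by
  simp only [trees, mem_map, mem_univ, true_and, Embedding.coeFn_mk]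
  constructor
  · rintro ⟨T, rfl⟩
    exact isTreeOn_natMap_iff.2 T.2
  · intro hp
    obtain ⟨f, rfl⟩ := exists_natMap_eq hp.le hp.map_eq_zero
    exact ⟨⟨f, isTreeOn_natMap_iff.1 hp⟩, rfl⟩

lemma sum_cayleyTree_natMap {M : Type*} [AddCommMonoid M] (m : ℕ) (F : (ℕ → ℕ) → M) :
    ∑ T : CayleyTree (m + 1), F (natMap T.1) = ∑ p ∈ trees m, F p := by
  rw [trees, sum_map]
  rfl

lemma trees_zero : trees 0 = {fun _ => 0} := by
  ext p
  rw [mem_trees, mem_singleton]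
  constructor
  · exact fun hp => funext fun v => Nat.le_zero.1 (hp.le v)
  · rintro rfl
    exact ⟨⟨rfl, fun v => ⟨1, rfl⟩⟩, fun _ => le_rfl, fun _ _ => rfl⟩

section Statistics

variable {m : ℕ} {p : ℕ → ℕ} {c : ℕ}

/-- The improper edges of a tree on `{0, …, m}`; an edge is represented by its child. -/
def improperEdges (m : ℕ) (p : ℕ → ℕ) : Finset ℕ := {c ∈ Icc 1 m | minDesc p c < p c}

/-- The improper parents of a tree on `{0, …, m}`. The root `0` never is one. -/
def improperParents (m : ℕ) (p : ℕ → ℕ) : Finset ℕ := {c ∈ Icc 1 m | minDesc p c ≠ c}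

/-- The children of the root of a tree on `{0, …, m}`. -/
def rootChildren (m : ℕ) (p : ℕ → ℕ) : Finset ℕ := {c ∈ Icc 1 m | p c = 0}

lemma mem_improperEdges :
    c ∈ improperEdges m p ↔ (1 ≤ c ∧ c ≤ m) ∧ minDesc p c < p c := by
  rw [improperEdges, mem_filter, mem_Icc]

lemma mem_improperParents :
    c ∈ improperParents m p ↔ (1 ≤ c ∧ c ≤ m) ∧ minDesc p c ≠ c := by
  rw [improperParents, mem_filter, mem_Icc]

lemma mem_rootChildren : c ∈ rootChildren m p ↔ (1 ≤ c ∧ c ≤ m) ∧ p c = 0 := by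
  rw [rootChildren, mem_filter, mem_Icc]

lemma IsTreeOn.mem_improperEdges_of_lt (hp : IsTreeOn m p) (hc : c ≠ 0)
    (hlt : minDesc p c < p c) : c ∈ improperEdges m p :=
  mem_improperEdges.2 ⟨⟨Nat.one_le_iff_ne_zero.2 hc, hp.le_of_map_ne_zero hlt.ne_bot⟩, hlt⟩

/-- Every improper parent has exactly one child with the same minimal descendant. -/
lemma IsTreeOn.card_firstImproperEdges (hp : IsTreeOn m p) :
    #{c ∈ improperEdges m p | minDesc p (p c) = minDesc p c} = #(improperParents m p) := by
  refine card_bij (fun c _ => p c) (fun c hc => ?_) (fun c hc d hd hcd => ?_) fun v hv => ?_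
  · simp only [mem_filter, mem_improperEdges] at hc
    have := hp.le c
    rw [mem_improperParents]
    omega
  · simp only [mem_filter, mem_improperEdges] at hc hd
    exact hp.eq_of_minDesc_eq (by omega) (by omega) hcd (by rw [← hc.2, ← hd.2, hcd])
  · rw [mem_improperParents] at hv
    obtain ⟨c, hc, rfl, hcv⟩ := hp.exists_child_minDesc_eq hv.2
    exact ⟨c, mem_filter.2 ⟨hp.mem_improperEdges_of_lt hc (hp.minDesc_lt_map_of_eq hc hcv.symm),
      hcv.symm⟩, rfl⟩

/-- Every improper parent has exactly one improper child whose minimal descendant is largest. -/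
lemma IsTreeOn.card_lastImproperEdges (hp : IsTreeOn m p) :
    #{c ∈ improperEdges m p | ∀ d ∈ improperEdges m p, p d = p c → minDesc p d ≤ minDesc p c}
      = #(improperParents m p) := by
  refine card_bij (fun c _ => p c) (fun c hc => ?_) (fun c hc d hd hcd => ?_) fun v hv => ?_
  · simp only [mem_filter, mem_improperEdges] at hc
    have := hp.le c
    have := minDesc_map_le p c
    rw [mem_improperParents]
    omega
  · rw [mem_filter] at hc hd
    have hmin : minDesc p c = minDesc p d :=
      le_antisymm (hd.2 c hc.1 hcd) (hc.2 d hd.1 hcd.symm)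
    rw [mem_improperEdges] at hc hd
    exact hp.eq_of_minDesc_eq (by omega) (by omega) hcd hmin
  · rw [mem_improperParents] at hv
    obtain ⟨c, hc, hcv, hlt⟩ := hp.minDesc_ne_self_iff.1 hv.2
    obtain ⟨d, hd, hmax⟩ := exists_max_image {c ∈ improperEdges m p | p c = v} (minDesc p)
      ⟨c, mem_filter.2 ⟨hp.mem_improperEdges_of_lt hc (hcv ▸ hlt), hcv⟩⟩
    rw [mem_filter] at hd
    exact ⟨d, mem_filter.2 ⟨hd.1, fun e he hed => hmax e (mem_filter.2 ⟨he, hed.trans hd.2⟩)⟩, hd.2⟩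

lemma IsTreeOn.card_improperParents_le (hp : IsTreeOn m p) :
    #(improperParents m p) ≤ #(improperEdges m p) := by
  rw [← hp.card_firstImproperEdges]
  exact card_filter_le _ _

end Statistics

section Contraction

/-- The contraction of the edge from `i` to its parent `m + 1`: the merged vertex is called `i`. -/
def contract (m : ℕ) (q : ℕ → ℕ) (i v : ℕ) : ℕ :=
  if v = m + 1 then 0 else if v = i then q (m + 1) else if q v = m + 1 then i else q v

namespace IsTreeOn

variable {m : ℕ} {q : ℕ → ℕ} {i u a : ℕ}

lemma map_succ_le (hq : IsTreeOn (m + 1) q) : q (m + 1) ≤ m :=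
  Nat.le_of_lt_succ ((hq.le _).lt_of_ne (hq.map_ne_self m.succ_ne_zero))

lemma mem_Icc_of_map_eq_succ (hq : IsTreeOn (m + 1) q) (hi : q i = m + 1) : i ∈ Icc 1 m := by
  have hi0 : i ≠ 0 := by
    rintro rfl
    exact absurd (hq.map_zero.symm.trans hi) m.succ_ne_zero.symm
  have hiN : i ≠ m + 1 := by
    rintro rfl
    exact (Nat.lt_succ_of_le hq.map_succ_le).ne hi
  have him := hq.le_of_map_ne_zero (c := i) (by omega)
  rw [mem_Icc]
  omega

lemma reaches_contract (hq : IsTreeOn (m + 1) q) (hi : q i = m + 1) (hua : Reaches q u a) :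
    Reaches (contract m q i) (if u = m + 1 then i else u) (if a = m + 1 then i else a) := by
  have hN : q (m + 1) ≠ m + 1 := (Nat.lt_succ_of_le hq.map_succ_le).ne
  have hiN : i ≠ m + 1 := (Nat.lt_succ_of_le (mem_Icc.1 (hq.mem_Icc_of_map_eq_succ hi)).2).ne
  refine hua.map_of_forall (h := fun w => if w = m + 1 then i else w) fun v => ?_
  rcases eq_or_ne v (m + 1) with rfl | hv
  · exact ⟨1, by simp [contract, hiN, hN]⟩
  · rcases eq_or_ne v i with rfl | hvi
    · simpa [hi, hv] using Reaches.refl _ v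
    · exact ⟨1, by simp [contract, hv, hvi]⟩

lemma isTreeOn_contract (hq : IsTreeOn (m + 1) q) (hi : q i = m + 1) :
    IsTreeOn m (contract m q i) := by
  have him := mem_Icc.1 (hq.mem_Icc_of_map_eq_succ hi)
  have hN := hq.map_succ_le
  refine ⟨⟨?_, fun v => ?_⟩, fun v => ?_, fun v hv => ?_⟩
  · rw [contract, if_neg m.succ_ne_zero.symm, if_neg (by omega), hq.map_zero,
      if_neg m.succ_ne_zero.symm]
  · rcases eq_or_ne v (m + 1) with rfl | hv
    · exact ⟨1, if_pos rfl⟩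
    · simpa [hv] using hq.reaches_contract hi (hq.reaches_zero v)
  · have := hq.le v
    unfold contract
    split_ifs <;> omega
  · rcases eq_or_ne v (m + 1) with rfl | hvN
    · exact if_pos rfl
    · have hv0 := hq.map_eq_zero v (by omega)
      rw [contract, if_neg hvN, if_neg (by omega), if_neg (by omega), hv0]

lemma minDesc_contract (hq : IsTreeOn (m + 1) q) (hi : q i = m + 1) (v : ℕ) :
    minDesc (contract m q i) v =
      if v = m + 1 then m + 1 else if v = i then minDesc q (m + 1) else minDesc q v := by
  have him := mem_Icc.1 (hq.mem_Icc_of_map_eq_succ hi)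
  have hN := hq.map_succ_le
  have hmin : minDesc q (m + 1) ≤ minDesc q i := hi ▸ minDesc_map_le q i
  have hmini := minDesc_le q i
  set g : ℕ → ℕ := fun v => if v = m + 1 then m + 1
    else if v = i then minDesc q (m + 1) else minDesc q v with hg
  suffices h : minDesc (contract m q i) = g from congrFun h v
  refine minDesc_eq_of_forall (fun v => ?_) (fun v => ?_) fun a => ?_
  · have := minDesc_le q v
    simp only [hg]
    split_ifs <;> omega
  · have hv := minDesc_map_le q v
    have hNq := minDesc_map_le q (m + 1)
    have h0 := minDesc_zero q
    have hne : q (m + 1) ≠ i := fun h => by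
      have := hq.eq_zero_of_reaches_self (v := i) ⟨1, by rw [hi, iterate_one, h]⟩
      omega
    grind [contract]
  · rcases eq_or_ne a (m + 1) with rfl | haN
    · simpa [hg] using Reaches.refl _ _
    rcases eq_or_ne a i with rfl | hai
    · have hne : minDesc q (m + 1) ≠ m + 1 := by omega
      simpa [hg, haN, hne] using hq.reaches_contract hi (reaches_minDesc q (m + 1))
    · have hne : minDesc q a ≠ m + 1 := fun h => by
        have := minDesc_le q a
        have := hq.minDesc_of_lt (v := a) (by omega)
        omega
      simpa [hg, haN, hai, hne] using hq.reaches_contract hi (reaches_minDesc q a)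

end IsTreeOn

end Contraction

section Insertion

/-- The insertion of the vertex `m + 1` between `i` and its parent: `i` becomes a child of `m + 1`,
together with the former children `c` of `i` such that `β(c) ≤ t`. -/
def insertAbove (m : ℕ) (p : ℕ → ℕ) (i t v : ℕ) : ℕ :=
  if v = m + 1 then p i else if v = i ∨ p v = i ∧ minDesc p v ≤ t then m + 1 else p v

/-- The admissible pairs `(i, t)` for `insertAbove m p i t`: every set of improper children of `i`
moved to the new vertex is determined by its largest minimal descendant `t`, where `t = 0` stands
for the empty set. -/
def insertionData (m : ℕ) (p : ℕ → ℕ) : Finset (ℕ × ℕ) :=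
  (Icc 1 m).image (fun i => (i, 0)) ∪ (improperEdges m p).image fun j => (p j, minDesc p j)

variable {m : ℕ} {p p' q : ℕ → ℕ} {i i' t t' v c : ℕ}

lemma insertAbove_succ : insertAbove m p i t (m + 1) = p i := if_pos rfl

lemma insertAbove_self (hi : i ≤ m) : insertAbove m p i t i = m + 1 := by
  rw [insertAbove, if_neg (by omega), if_pos (.inl rfl)]

lemma insertAbove_of_ne (hv : v ≠ m + 1) (hvi : v ≠ i) :
    insertAbove m p i t v = if p v = i ∧ minDesc p v ≤ t then m + 1 else p v := by
  rw [insertAbove, if_neg hv]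
  simp only [hvi, false_or]

lemma rootChildren_insertAbove (hi : i ∈ Icc 1 m) :
    rootChildren (m + 1) (insertAbove m p i t) =
      (rootChildren m p).map (Equiv.swap i (m + 1)).toEmbedding := by
  rw [mem_Icc] at hi
  ext c
  rw [mem_map_equiv, Equiv.symm_swap, mem_rootChildren, mem_rootChildren]
  rcases eq_or_ne c (m + 1) with rfl | hc
  · rw [Equiv.swap_apply_right, insertAbove_succ]
    omega
  rcases eq_or_ne c i with rfl | hci
  · rw [Equiv.swap_apply_left, insertAbove_self hi.2]
    omega
  · rw [Equiv.swap_apply_of_ne_of_ne hci hc, insertAbove_of_ne hc hci]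
    split_ifs <;> grind

lemma card_rootChildren_insertAbove (hi : i ∈ Icc 1 m) :
    #(rootChildren (m + 1) (insertAbove m p i t)) = #(rootChildren m p) := by
  rw [rootChildren_insertAbove hi, card_map]

namespace IsTreeOn

lemma mem_insertionData (hp : IsTreeOn m p) : (i, t) ∈ insertionData m p ↔
    i ∈ Icc 1 m ∧ (t = 0 ∨ ∃ j ∈ improperEdges m p, p j = i ∧ minDesc p j = t) := by
  simp only [insertionData, mem_union, mem_image, Prod.mk.injEq]
  constructor
  · rintro (⟨i, hi, rfl, rfl⟩ | ⟨j, hj, rfl, rfl⟩)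
    · exact ⟨hi, .inl rfl⟩
    · have hlt := (mem_improperEdges.1 hj).2
      exact ⟨mem_Icc.2 ⟨by omega, hp.le j⟩, .inr ⟨j, hj, rfl, rfl⟩⟩
  · rintro ⟨hi, rfl | hj⟩
    · exact .inl ⟨i, hi, rfl, rfl⟩
    · exact .inr hj

lemma lt_of_mem_insertionData (hp : IsTreeOn m p) (hit : (i, t) ∈ insertionData m p) : t < i := by
  obtain ⟨hi, rfl | ⟨j, hj, rfl, rfl⟩⟩ := hp.mem_insertionData.1 hit
  · exact (mem_Icc.1 hi).1
  · exact (mem_improperEdges.1 hj).2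

lemma isTreeOn_insertAbove (hp : IsTreeOn m p) (hi : i ∈ Icc 1 m) :
    IsTreeOn (m + 1) (insertAbove m p i t) := by
  rw [mem_Icc] at hi
  have hq0 : insertAbove m p i t 0 = 0 := by
    rw [insertAbove_of_ne (by omega) (by omega), hp.map_zero, if_neg (by omega)]
  have reach : ∀ v, v ≠ m + 1 → Reaches (insertAbove m p i t) v 0 := by
    intro v
    induction v using hp.induction with
    | zero => exact fun _ => .refl _ 0
    | map v _ ih =>
      intro hv
      have hpv := ih (hp.ne_of_lt (Nat.lt_succ_self m) v)
      rcases eq_or_ne v i with rfl | hvi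
      · refine Reaches.of_map (Reaches.of_map ?_)
        rwa [insertAbove_self hi.2, insertAbove_succ]
      · refine Reaches.of_map ?_
        rw [insertAbove_of_ne hv hvi]
        split_ifs with hmove
        · rwa [hmove.1, ← reaches_map_zero_iff hq0, insertAbove_self hi.2] at hpv
        · exact hpv
  refine ⟨⟨hq0, fun v => ?_⟩, fun v => ?_, fun v hv => ?_⟩
  · rcases eq_or_ne v (m + 1) with rfl | hv
    · refine Reaches.of_map ?_
      rw [insertAbove_succ]
      exact reach _ (hp.ne_of_lt (Nat.lt_succ_self m) i)
    · exact reach v hv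
  · have := hp.le v
    have := hp.le i
    unfold insertAbove
    split_ifs <;> omega
  · have hv0 := hp.map_eq_zero v (by omega)
    rw [insertAbove_of_ne (by omega) (by omega), hv0, if_neg (by omega)]

lemma contract_insertAbove (hp : IsTreeOn m p) : contract m (insertAbove m p i t) i = p := by
  funext v
  have hv := hp.le v
  have hN := hp.map_eq_zero (m + 1) (Nat.lt_succ_self m)
  unfold contract insertAbove
  split_ifs <;> grind

lemma minDesc_insertAbove_succ (hp : IsTreeOn m p) (hi : i ∈ Icc 1 m) :
    minDesc (insertAbove m p i t) (m + 1) = minDesc p i := by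
  have him := (mem_Icc.1 hi).2
  have h := (hp.isTreeOn_insertAbove (t := t) hi).minDesc_contract (insertAbove_self him) i
  rw [hp.contract_insertAbove, if_neg (by omega), if_pos rfl] at h
  exact h.symm

lemma minDesc_insertAbove_of_ne (hp : IsTreeOn m p) (hi : i ∈ Icc 1 m) (hv : v ≠ m + 1)
    (hvi : v ≠ i) : minDesc (insertAbove m p i t) v = minDesc p v := by
  have him := (mem_Icc.1 hi).2
  have h := (hp.isTreeOn_insertAbove (t := t) hi).minDesc_contract (insertAbove_self him) v
  rw [hp.contract_insertAbove, if_neg hv, if_neg hvi] at h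
  exact h.symm

lemma insertAbove_eq_iff (hp : IsTreeOn m p) (hi : i ∈ Icc 1 m) :
    insertAbove m p i t c = i ↔ p c = i ∧ t < minDesc p c := by
  rw [mem_Icc] at hi
  have hpi : p i ≠ i := hp.map_ne_self (by omega)
  rcases eq_or_ne c (m + 1) with rfl | hc
  · rw [insertAbove_succ, hp.map_eq_zero (m + 1) (Nat.lt_succ_self m)]
    grind
  · rcases eq_or_ne c i with rfl | hci
    · rw [insertAbove_self hi.2]
      grind
    · rw [insertAbove_of_ne hc hci]
      grind

lemma minDesc_insertAbove_of_insertAbove_eq (hp : IsTreeOn m p) (hi : i ∈ Icc 1 m)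
    (hc : insertAbove m p i t c = i) :
    p c = i ∧ t < minDesc p c ∧ minDesc (insertAbove m p i t) c = minDesc p c := by
  obtain ⟨hpc, htc⟩ := (hp.insertAbove_eq_iff hi).1 hc
  rw [mem_Icc] at hi
  have hcN := hp.le_of_map_ne_zero (c := c) (by omega)
  have hci : c ≠ i := by
    rintro rfl
    exact hp.map_ne_self (by omega) hpc
  exact ⟨hpc, htc, hp.minDesc_insertAbove_of_ne (mem_Icc.2 hi) (by omega) hci⟩

lemma lt_minDesc_insertAbove (hp : IsTreeOn m p) (hi : i ∈ Icc 1 m) (hti : t < i) :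
    t < minDesc (insertAbove m p i t) i := by
  by_cases hself : minDesc (insertAbove m p i t) i = i
  · rwa [hself]
  · obtain ⟨c, -, hc, hci⟩ := (hp.isTreeOn_insertAbove hi).exists_child_minDesc_eq hself
    obtain ⟨-, htc, hmin⟩ := hp.minDesc_insertAbove_of_insertAbove_eq hi hc
    rwa [← hci, hmin]

lemma minDesc_insertAbove_ne_self_iff (hp : IsTreeOn m p) (hi : i ∈ Icc 1 m) :
    minDesc (insertAbove m p i t) i ≠ i ↔
      ∃ c, c ≠ 0 ∧ p c = i ∧ t < minDesc p c ∧ minDesc p c < i := by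
  rw [(hp.isTreeOn_insertAbove hi).minDesc_ne_self_iff]
  refine exists_congr fun c => and_congr_right fun _ => ?_
  constructor
  · rintro ⟨hc, hlt⟩
    obtain ⟨hpc, htc, hmin⟩ := hp.minDesc_insertAbove_of_insertAbove_eq hi hc
    exact ⟨hpc, htc, hmin ▸ hlt⟩
  · rintro ⟨hpc, htc, hlt⟩
    have hc := (hp.insertAbove_eq_iff hi).2 ⟨hpc, htc⟩
    exact ⟨hc, (hp.minDesc_insertAbove_of_insertAbove_eq hi hc).2.2 ▸ hlt⟩

lemma improperEdges_insertAbove (hp : IsTreeOn m p) (hi : i ∈ Icc 1 m) (hti : t < i) :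
    improperEdges (m + 1) (insertAbove m p i t) =
      insert i ((improperEdges m p).map (Equiv.swap i (m + 1)).toEmbedding) := by
  have him := mem_Icc.1 hi
  ext c
  rw [mem_insert, mem_map_equiv, Equiv.symm_swap, mem_improperEdges, mem_improperEdges]
  rcases eq_or_ne c (m + 1) with rfl | hc
  · rw [Equiv.swap_apply_right, insertAbove_succ, hp.minDesc_insertAbove_succ hi]
    omega
  rcases eq_or_ne c i with rfl | hci
  · rw [insertAbove_self him.2]
    have := minDesc_le (insertAbove m p c t) c
    omega
  · rw [Equiv.swap_apply_of_ne_of_ne hci hc, hp.minDesc_insertAbove_of_ne hi hc hci,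
      insertAbove_of_ne hc hci]
    split_ifs <;> omega

lemma improperParents_insertAbove (hp : IsTreeOn m p) (hi : i ∈ Icc 1 m) :
    improperParents (m + 1) (insertAbove m p i t) =
      insert (m + 1) (if minDesc (insertAbove m p i t) i = i then (improperParents m p).erase i
        else insert i (improperParents m p)) := by
  have him := mem_Icc.1 hi
  ext c
  rw [mem_insert, mem_improperParents]
  rcases eq_or_ne c (m + 1) with rfl | hc
  · rw [hp.minDesc_insertAbove_succ hi]
    have := minDesc_le p i
    omega
  rcases eq_or_ne c i with rfl | hci
  · split_ifs with h
    · simp [h, hc]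
    · simpa [h] using ⟨him.1, him.2.trans m.le_succ⟩
  · rw [hp.minDesc_insertAbove_of_ne hi hc hci]
    split_ifs <;> simp only [mem_erase, mem_insert, mem_improperParents] <;> omega

lemma card_improperEdges_insertAbove (hp : IsTreeOn m p) (hi : i ∈ Icc 1 m) (hti : t < i) :
    #(improperEdges (m + 1) (insertAbove m p i t)) = #(improperEdges m p) + 1 := by
  rw [hp.improperEdges_insertAbove hi hti, card_insert_of_notMem, card_map]
  rw [mem_map_equiv, Equiv.symm_swap, Equiv.swap_apply_left, mem_improperEdges]
  omega

lemma card_improperParents_insertAbove_zero (hp : IsTreeOn m p) (hi : i ∈ Icc 1 m) :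
    #(improperParents (m + 1) (insertAbove m p i 0)) = #(improperParents m p) + 1 := by
  have hself : minDesc (insertAbove m p i 0) i ≠ i ↔ minDesc p i ≠ i := by
    rw [hp.minDesc_insertAbove_ne_self_iff hi, hp.minDesc_ne_self_iff]
    refine exists_congr fun c => and_congr_right fun hc => and_congr_right fun _ => ?_
    exact and_iff_right (hp.minDesc_pos hc)
  have hN : m + 1 ∉ improperParents m p := by
    rw [mem_improperParents]
    omega
  have hset : improperParents (m + 1) (insertAbove m p i 0)
      = insert (m + 1) (improperParents m p) := by
    rw [hp.improperParents_insertAbove hi]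
    split_ifs with h
    · rw [erase_eq_of_notMem fun hmem => (mem_improperParents.1 hmem).2 ?_]
      exact not_not.1 (hself.not.1 (not_not.2 h))
    · rw [insert_eq_of_mem (mem_improperParents.2 ⟨mem_Icc.1 hi, hself.1 h⟩)]
  rw [hset, card_insert_of_notMem hN]

lemma card_improperParents_insertAbove_minDesc (hp : IsTreeOn m p) {j : ℕ}
    (hj : j ∈ improperEdges m p) :
    #(improperParents (m + 1) (insertAbove m p (p j) (minDesc p j))) =
      if ∀ d ∈ improperEdges m p, p d = p j → minDesc p d ≤ minDesc p j
      then #(improperParents m p) else #(improperParents m p) + 1 := by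
  have hlt := (mem_improperEdges.1 hj).2
  have hi : p j ∈ Icc 1 m := mem_Icc.2 ⟨by omega, hp.le j⟩
  have hmem : p j ∈ improperParents m p :=
    mem_improperParents.2 ⟨mem_Icc.1 hi, ((minDesc_map_le p j).trans_lt hlt).ne⟩
  have hN : m + 1 ∉ improperParents m p := by
    rw [mem_improperParents]
    omega
  have hlast : minDesc (insertAbove m p (p j) (minDesc p j)) (p j) = p j ↔
      ∀ d ∈ improperEdges m p, p d = p j → minDesc p d ≤ minDesc p j := by
    rw [← not_iff_not, ← ne_eq, hp.minDesc_insertAbove_ne_self_iff hi]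
    push Not
    refine exists_congr fun d => ⟨fun ⟨hd0, hd, hjd, hdlt⟩ => ?_, fun ⟨hd, hdj, hjd⟩ => ?_⟩
    · exact ⟨hp.mem_improperEdges_of_lt hd0 (hd ▸ hdlt), hd, hjd⟩
    · have := mem_improperEdges.1 hd
      exact ⟨by omega, hdj, hjd, by omega⟩
  rw [hp.improperParents_insertAbove hi]
  simp only [hlast]
  split_ifs
  · rw [card_insert_of_notMem fun h => hN (mem_of_mem_erase h), card_erase_add_one hmem]
  · rw [insert_eq_of_mem hmem, card_insert_of_notMem hN]

lemma eq_or_minDesc_le_of_insertAbove_eq_succ (hp : IsTreeOn m p) (hi : i ∈ Icc 1 m)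
    (hc : insertAbove m p i t c = m + 1) :
    c = i ∨ minDesc (insertAbove m p i t) c ≤ t := by
  have hle := hp.le c
  have hlei := hp.le i
  rcases eq_or_ne c (m + 1) with rfl | hcN
  · rw [insertAbove_succ] at hc
    omega
  refine or_iff_not_imp_left.2 fun hci => ?_
  rw [insertAbove_of_ne hcN hci] at hc
  rw [hp.minDesc_insertAbove_of_ne hi hcN hci]
  split_ifs at hc with hmove
  · exact hmove.2
  · omega

end IsTreeOn

namespace IsTreeOn

lemma eq_left_of_insertAbove_eq (hp : IsTreeOn m p) (hp' : IsTreeOn m p')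
    (h : (i, t) ∈ insertionData m p) (h' : (i', t') ∈ insertionData m p')
    (heq : insertAbove m p i t = insertAbove m p' i' t') : i = i' := by
  have hi := (hp.mem_insertionData.1 h).1
  have hi' := (hp'.mem_insertionData.1 h').1
  have hlt := hp.lt_minDesc_insertAbove hi (hp.lt_of_mem_insertionData h)
  have hlt' := hp'.lt_minDesc_insertAbove hi' (hp'.lt_of_mem_insertionData h')
  by_contra hne
  have hle := (hp.eq_or_minDesc_le_of_insertAbove_eq_succ hi
    (heq ▸ insertAbove_self (mem_Icc.1 hi').2)).resolve_left (Ne.symm hne)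
  have hle' := (hp'.eq_or_minDesc_le_of_insertAbove_eq_succ hi'
    (heq ▸ insertAbove_self (mem_Icc.1 hi).2)).resolve_left hne
  rw [← heq] at hlt' hle'
  omega

lemma le_of_insertAbove_eq (hp : IsTreeOn m p) (h : (i, t) ∈ insertionData m p)
    (heq : insertAbove m p i t = insertAbove m p i t') : t ≤ t' := by
  obtain ⟨hi, rfl | ⟨j, hj, rfl, rfl⟩⟩ := hp.mem_insertionData.1 h
  · exact Nat.zero_le _
  · have hj' := mem_improperEdges.1 hj
    have hjN : j ≠ m + 1 := by omega
    have hji : j ≠ p j := (hp.map_ne_self (by omega)).symm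
    have hmove : insertAbove m p (p j) (minDesc p j) j = m + 1 := by
      rw [insertAbove_of_ne hjN hji, if_pos ⟨rfl, le_rfl⟩]
    rw [← hp.minDesc_insertAbove_of_ne hi hjN hji]
    exact (hp.eq_or_minDesc_le_of_insertAbove_eq_succ hi (heq ▸ hmove)).resolve_left hji

lemma insertAbove_injective (hp : IsTreeOn m p) (hp' : IsTreeOn m p')
    (h : (i, t) ∈ insertionData m p) (h' : (i', t') ∈ insertionData m p')
    (heq : insertAbove m p i t = insertAbove m p' i' t') : p = p' ∧ i = i' ∧ t = t' := by
  obtain rfl := hp.eq_left_of_insertAbove_eq hp' h h' heq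
  obtain rfl : p = p' := by rw [← hp.contract_insertAbove, heq, hp'.contract_insertAbove]
  exact ⟨rfl, rfl, le_antisymm (hp.le_of_insertAbove_eq h heq)
    (hp.le_of_insertAbove_eq h' heq.symm)⟩

lemma insertAbove_contract (hq : IsTreeOn (m + 1) q) (hi : q i = m + 1)
    (hle : ∀ c, q c = m + 1 → c ≠ i → minDesc q c ≤ t) (hlt : ∀ c, q c = i → t < minDesc q c) :
    insertAbove m (contract m q i) i t = q := by
  have him := mem_Icc.1 (hq.mem_Icc_of_map_eq_succ hi)
  funext v
  rcases eq_or_ne v (m + 1) with rfl | hvN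
  · rw [insertAbove_succ, contract, if_neg (by omega), if_pos rfl]
  rcases eq_or_ne v i with rfl | hvi
  · rw [insertAbove_self him.2, hi]
  have hv := hlt v
  have hv' := hle v
  rw [insertAbove_of_ne hvN hvi, hq.minDesc_contract hi, if_neg hvN, if_neg hvi, contract,
    if_neg hvN, if_neg hvi]
  grind

lemma exists_insertAbove_eq (hq : IsTreeOn (m + 1) q) (hc : q c = m + 1) :
    ∃ p, IsTreeOn m p ∧ ∃ x ∈ insertionData m p, insertAbove m p x.1 x.2 = q := by
  set s := {d ∈ Icc 1 m | q d = m + 1}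
  have mem_s : ∀ {d}, d ∈ s ↔ q d = m + 1 := fun {d} =>
    mem_filter.trans (and_iff_right_of_imp hq.mem_Icc_of_map_eq_succ)
  obtain ⟨i, his, hmax⟩ := exists_max_image s (minDesc q) ⟨c, mem_s.2 hc⟩
  have hi := mem_s.1 his
  have him := mem_Icc.1 (hq.mem_Icc_of_map_eq_succ hi)
  have hlt : ∀ d ∈ s.erase i, minDesc q d < minDesc q i := fun d hd => by
    obtain ⟨hdi, hds⟩ := mem_erase.1 hd
    have hd0 := mem_Icc.1 (mem_filter.1 hds).1
    exact (hmax d hds).lt_of_ne fun h =>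
      hdi (hq.eq_of_minDesc_eq (by omega) (by omega) ((mem_s.1 hds).trans hi.symm) h)
  have hp := hq.isTreeOn_contract hi
  refine ⟨_, hp, (i, (s.erase i).sup (minDesc q)), hp.mem_insertionData.2 ⟨mem_Icc.2 him, ?_⟩,
    hq.insertAbove_contract hi (fun d hd hdi => le_sup (mem_erase.2 ⟨hdi, mem_s.2 hd⟩))
      fun d hd => ?_⟩
  · rcases (s.erase i).eq_empty_or_nonempty with h | h
    · exact .inl (by rw [h, sup_empty]; rfl)
    · obtain ⟨j, hj, hjsup⟩ := exists_mem_eq_sup _ h (minDesc q)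
      have hji := (mem_erase.1 hj).1
      have hjN := mem_s.1 (mem_erase.1 hj).2
      have hjm := mem_Icc.1 (hq.mem_Icc_of_map_eq_succ hjN)
      have hmap : contract m q i j = i := by
        rw [contract, if_neg (by omega), if_neg hji, if_pos hjN]
      have hmin : minDesc (contract m q i) j = minDesc q j := by
        rw [hq.minDesc_contract hi, if_neg (by omega), if_neg hji]
      refine .inr ⟨j, mem_improperEdges.2 ⟨hjm, ?_⟩, hmap, hmin.trans hjsup.symm⟩
      rw [hmap, hmin]
      exact (hlt j hj).trans_le (minDesc_le q i)
  · exact ((Finset.sup_lt_iff (hq.minDesc_pos (by omega))).2 hlt).trans_le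
      (hd ▸ minDesc_map_le q d)

end IsTreeOn

end Insertion

section Recurrence

variable {M : Type*} [AddCommMonoid M] {m : ℕ} {p : ℕ → ℕ}

lemma IsTreeOn.sum_insertionData (hp : IsTreeOn m p) (f : ℕ × ℕ → M) :
    ∑ x ∈ insertionData m p, f x =
      ∑ i ∈ Icc 1 m, f (i, 0) + ∑ j ∈ improperEdges m p, f (p j, minDesc p j) := by
  rw [insertionData, sum_union, sum_image fun c _ d _ h => congrArg Prod.fst h, sum_image]
  · intro c hc d hd h
    rw [mem_coe, mem_improperEdges] at hc hd
    exact hp.eq_of_minDesc_eq (by omega) (by omega) (congrArg Prod.fst h) (congrArg Prod.snd h)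
  · simp only [disjoint_left, mem_image]
    rintro _ ⟨i, -, rfl⟩ ⟨j, hj, hij⟩
    have hj0 := (mem_improperEdges.1 hj).1
    exact (hp.minDesc_pos (by omega)).ne' (congrArg Prod.snd hij)

lemma IsTreeOn.isTreeOn_update (hp : IsTreeOn m p) {v : ℕ} (hv : v ≤ m) :
    IsTreeOn (m + 1) (update p (m + 1) v) := by
  refine ⟨hp.update_leaf (by omega) (hp.ne_of_lt (by omega)) (by omega), fun w => ?_,
    fun w hw => ?_⟩
  · have := hp.le w
    rw [update_apply]
    split_ifs <;> omega
  · rw [update_of_ne (by omega), hp.map_eq_zero w (by omega)]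

lemma IsTreeOn.isTreeOn_update_zero {q : ℕ → ℕ} (hq : IsTreeOn (m + 1) q)
    (hleaf : ∀ w, q w ≠ m + 1) : IsTreeOn m (update q (m + 1) 0) := by
  refine ⟨hq.update_leaf (by omega) hleaf (by omega), fun w => ?_, fun w hw => ?_⟩
  · have := hq.le w
    have := hleaf w
    rw [update_apply]
    split_ifs <;> omega
  · rcases eq_or_ne w (m + 1) with rfl | hwN
    · exact update_self _ _ _
    · rw [update_of_ne hwN, hq.map_eq_zero w (by omega)]

open scoped Classical in
lemma sum_trees_succ_leaf (m : ℕ) (F : (ℕ → ℕ) → M) :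
    ∑ q ∈ trees (m + 1) with ∀ c, q c ≠ m + 1, F q =
      ∑ p ∈ trees m, ∑ v ∈ range (m + 1), F (update p (m + 1) v) := by
  rw [sum_sigma']
  symm
  refine sum_bij (fun x _ => update x.1 (m + 1) x.2) ?_ ?_ ?_ fun _ _ => rfl
  · rintro ⟨p, v⟩ hx
    obtain ⟨hp, hv⟩ : IsTreeOn m p ∧ v < m + 1 := by simpa using hx
    refine mem_filter.2 ⟨mem_trees.2 (hp.isTreeOn_update (Nat.le_of_lt_succ hv)), fun c => ?_⟩
    rw [update_apply]
    split_ifs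
    · exact hv.ne
    · exact hp.ne_of_lt m.lt_succ_self c
  · rintro ⟨p, v⟩ hx ⟨p', v'⟩ hx' h
    simp only [mem_sigma, mem_trees] at hx hx'
    have hp : update p (m + 1) 0 = p := update_eq_self_iff.2 (hx.1.map_eq_zero _ (by omega)).symm
    have hp' : update p' (m + 1) 0 = p' :=
      update_eq_self_iff.2 (hx'.1.map_eq_zero _ (by omega)).symm
    obtain rfl : p = p' := by
      simpa [hp, hp'] using congrArg (fun q => update q (m + 1) 0) h
    obtain rfl : v = v' := by simpa using congrFun h (m + 1)
    rfl
  · intro q hq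
    obtain ⟨hq, hleaf⟩ : IsTreeOn (m + 1) q ∧ ∀ c, q c ≠ m + 1 := by simpa using hq
    refine ⟨⟨update q (m + 1) 0, q (m + 1)⟩, ?_, ?_⟩
    · rw [mem_sigma, mem_trees, mem_range]
      exact ⟨hq.isTreeOn_update_zero hleaf, (hq.le _).lt_of_ne (hleaf _)⟩
    · rw [update_idem, update_eq_self]

open scoped Classical in
lemma sum_trees_succ_internal (m : ℕ) (F : (ℕ → ℕ) → M) :
    ∑ q ∈ trees (m + 1) with ¬∀ c, q c ≠ m + 1, F q =
      ∑ p ∈ trees m, ∑ x ∈ insertionData m p, F (insertAbove m p x.1 x.2) := by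
  rw [sum_sigma']
  symm
  refine sum_bij (fun x _ => insertAbove m x.1 x.2.1 x.2.2) ?_ ?_ ?_ fun _ _ => rfl
  · rintro ⟨p, i, t⟩ hx
    rw [mem_sigma, mem_trees] at hx
    have hi := (hx.1.mem_insertionData.1 hx.2).1
    exact mem_filter.2 ⟨mem_trees.2 (hx.1.isTreeOn_insertAbove hi),
      fun h => h i (insertAbove_self (mem_Icc.1 hi).2)⟩
  · rintro ⟨p, i, t⟩ hx ⟨p', i', t'⟩ hx' h
    rw [mem_sigma, mem_trees] at hx hx'
    obtain ⟨rfl, rfl, rfl⟩ := hx.1.insertAbove_injective hx'.1 hx.2 hx'.2 h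
    rfl
  · intro q hq
    rw [mem_filter, mem_trees] at hq
    push Not at hq
    obtain ⟨hq, c, hc⟩ := hq
    obtain ⟨p, hp, x, hx, rfl⟩ := hq.exists_insertAbove_eq hc
    exact ⟨⟨p, x⟩, mem_sigma.2 ⟨mem_trees.2 hp, hx⟩, rfl⟩

/-- Deleting `m + 1` from a tree on `{0, …, m + 1}`, after contracting, if `m + 1` is not a leaf,
the edge to its child with the largest minimal descendant, is undone by one of `m + 1` leaf
attachments or by `insertAbove`. -/
lemma sum_trees_succ (m : ℕ) (F : (ℕ → ℕ) → M) :
    ∑ q ∈ trees (m + 1), F q = ∑ p ∈ trees m, (∑ v ∈ range (m + 1), F (update p (m + 1) v) +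
      (∑ i ∈ Icc 1 m, F (insertAbove m p i 0) +
        ∑ j ∈ improperEdges m p, F (insertAbove m p (p j) (minDesc p j)))) := by
  classical
  rw [← sum_filter_add_sum_filter_not _ (fun q : ℕ → ℕ => ∀ c, q c ≠ m + 1), sum_trees_succ_leaf,
    sum_trees_succ_internal, ← sum_add_distrib]
  exact sum_congr rfl fun p hp => by rw [(mem_trees.1 hp).sum_insertionData]

end Recurrence

section Weight

variable {R : Type*} {m : ℕ} {p : ℕ → ℕ}

/-- The weight of the edge from `c` to its parent: `x` at the root, `z` if the edge is proper, and
otherwise `a` if the edge accounts for the minimal descendant of the parent, `b` if it does not. -/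
def edgeWeight (p : ℕ → ℕ) (x a b z : R) (c : ℕ) : R :=
  if p c = 0 then x
  else if minDesc p c < p c then if minDesc p (p c) = minDesc p c then a else b
  else z

/-- The weight of a tree on `{0, …, m}`. -/
def treeWeight [CommMonoid R] (m : ℕ) (p : ℕ → ℕ) (x a b z : R) : R :=
  ∏ c ∈ Icc 1 m, edgeWeight p x a b z c

/-- The total weight of the trees on `{0, …, m}`. -/
def treeSum [CommSemiring R] (m : ℕ) (x a b z : R) : R := ∑ p ∈ trees m, treeWeight m p x a b z

lemma map_treeSum {S : Type*} [CommSemiring R] [CommSemiring S] (f : R →+* S) (m : ℕ)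
    (x a b z : R) : f (treeSum m x a b z) = treeSum m (f x) (f a) (f b) (f z) := by
  simp only [treeSum, treeWeight, edgeWeight, map_sum, map_prod, apply_ite f]

lemma treeSum_zero [CommSemiring R] (x a b z : R) : treeSum 0 x a b z = 1 := by
  rw [treeSum, trees_zero, sum_singleton, treeWeight, Icc_eq_empty (by omega), prod_empty]

lemma IsTreeOn.treeWeight_eq [CommMonoid R] (hp : IsTreeOn m p) (x a b z : R) :
    treeWeight m p x a b z = x ^ #(rootChildren m p) * a ^ #(improperParents m p) *
      b ^ (#(improperEdges m p) - #(improperParents m p)) *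
      z ^ (m - #(improperEdges m p) - #(rootChildren m p)) := by
  have himp : {c ∈ {c ∈ Icc 1 m | ¬p c = 0} | minDesc p c < p c} = improperEdges m p := by
    ext c
    simp only [mem_filter, mem_Icc, mem_improperEdges]
    omega
  have hroot := card_filter_add_card_filter_not (s := Icc 1 m) fun c => p c = 0
  have hproper := card_filter_add_card_filter_not (s := {c ∈ Icc 1 m | ¬p c = 0})
    fun c => minDesc p c < p c
  have hfirst := card_filter_add_card_filter_not (s := improperEdges m p)
    fun c => minDesc p (p c) = minDesc p c
  rw [himp] at hproper
  rw [hp.card_firstImproperEdges] at hfirst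
  rw [Nat.card_Icc, Nat.add_sub_cancel, ← rootChildren] at hroot
  rw [← Nat.eq_sub_of_add_eq' hfirst,
    show m - #(improperEdges m p) - #(rootChildren m p) =
      #{c ∈ {c ∈ Icc 1 m | ¬p c = 0} | ¬minDesc p c < p c} by omega]
  simp only [treeWeight, edgeWeight, prod_ite, prod_const, himp, hp.card_firstImproperEdges]
  rw [← rootChildren, ← mul_assoc, ← mul_assoc]

lemma IsTreeOn.treeWeight_update [CommMonoid R] (hp : IsTreeOn m p) {v : ℕ} (hv : v ≤ m)
    (x a b z : R) : treeWeight (m + 1) (update p (m + 1) v) x a b z =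
      treeWeight m p x a b z * if v = 0 then x else z := by
  have hmin : minDesc (update p (m + 1) v) = minDesc p := by
    refine minDesc_update_leaf (hp.ne_of_lt m.lt_succ_self) ?_ (Nat.lt_succ_of_le hv)
    rw [hp.map_eq_zero _ m.lt_succ_self]
    exact m.succ_pos
  rw [treeWeight, prod_Icc_succ_top (by omega), treeWeight]
  congr 1
  · refine prod_congr rfl fun c hc => ?_
    have hcN : c ≠ m + 1 := by
      rw [mem_Icc] at hc
      omega
    rw [edgeWeight, edgeWeight, hmin, update_of_ne hcN]
  · rw [edgeWeight, hmin, update_self, hp.minDesc_of_lt m.lt_succ_self,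
      if_neg (c := m + 1 < v) (by omega)]

lemma IsTreeOn.treeWeight_insertAbove_zero [CommSemiring R] (hp : IsTreeOn m p) {i : ℕ}
    (hi : i ∈ Icc 1 m) (x a b z : R) :
    treeWeight (m + 1) (insertAbove m p i 0) x a b z = treeWeight m p x a b z * a := by
  rw [(hp.isTreeOn_insertAbove hi).treeWeight_eq, hp.treeWeight_eq,
    card_rootChildren_insertAbove hi, hp.card_improperEdges_insertAbove hi (mem_Icc.1 hi).1,
    hp.card_improperParents_insertAbove_zero hi, Nat.add_sub_add_right, Nat.add_sub_add_right]
  ring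

lemma IsTreeOn.treeWeight_insertAbove_minDesc [CommSemiring R] (hp : IsTreeOn m p) {j : ℕ}
    (hj : j ∈ improperEdges m p) (x a b z : R) :
    treeWeight (m + 1) (insertAbove m p (p j) (minDesc p j)) x a b z = treeWeight m p x a b z *
      if ∀ d ∈ improperEdges m p, p d = p j → minDesc p d ≤ minDesc p j then b else a := by
  have hlt := (mem_improperEdges.1 hj).2
  have hi : p j ∈ Icc 1 m := mem_Icc.2 ⟨by omega, hp.le j⟩
  rw [(hp.isTreeOn_insertAbove hi).treeWeight_eq, hp.treeWeight_eq,
    card_rootChildren_insertAbove hi, hp.card_improperEdges_insertAbove hi hlt,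
    hp.card_improperParents_insertAbove_minDesc hj, Nat.add_sub_add_right]
  split_ifs
  · rw [Nat.sub_add_comm hp.card_improperParents_le]
    ring
  · rw [Nat.add_sub_add_right]
    ring

lemma treeSum_succ [CommSemiring R] (m : ℕ) (x a b z : R) :
    treeSum (m + 1) x a b z = ∑ p ∈ trees m, treeWeight m p x a b z * (x + m * (z + a) +
      (#(improperParents m p) * b +
        (#(improperEdges m p) - #(improperParents m p) : ℕ) * a)) := by
  rw [treeSum, sum_trees_succ]
  refine sum_congr rfl fun p hp => ?_
  rw [mem_trees] at hp
  have hlast := card_filter_add_card_filter_not (s := improperEdges m p)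
    fun c => ∀ d ∈ improperEdges m p, p d = p c → minDesc p d ≤ minDesc p c
  rw [hp.card_lastImproperEdges] at hlast
  rw [sum_congr rfl fun v hv => hp.treeWeight_update (mem_range_succ_iff.1 hv) x a b z,
    sum_congr rfl fun i hi => hp.treeWeight_insertAbove_zero hi x a b z,
    sum_congr rfl fun j hj => hp.treeWeight_insertAbove_minDesc hj x a b z,
    ← mul_sum, ← mul_sum, ← mul_sum, sum_range_succ', sum_ite (s := improperEdges m p),
    ← Nat.eq_sub_of_add_eq' hlast]
  simp only [sum_const, card_range, Nat.card_Icc, Nat.add_sub_cancel, nsmul_eq_mul, if_true,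
    Nat.add_one_ne_zero, if_false, hp.card_lastImproperEdges]
  ring

variable [CommRing R] {x a b z : R}

lemma mul_derivation_monomial (D : Derivation ℤ R R) (hx : D x = 0) (ha : D a = 1)
    (hb : D b = 1) (hz : D z = 0) (r f e s : ℕ) :
    a * b * D (x ^ r * a ^ f * b ^ e * z ^ s) =
      x ^ r * a ^ f * b ^ e * z ^ s * (f * b + e * a) := by
  cases f <;> cases e <;>
    simp only [Derivation.leibniz, Derivation.leibniz_pow, hx, ha, hb, hz, smul_eq_mul,
      nsmul_eq_mul, Nat.add_sub_cancel] <;> push_cast <;> ring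

lemma treeSum_succ_eq_derivation (D : Derivation ℤ R R) (hx : D x = 0) (ha : D a = 1)
    (hb : D b = 1) (hz : D z = 0) (m : ℕ) : treeSum (m + 1) x a b z =
      (x + m * (z + a)) * treeSum m x a b z + a * b * D (treeSum m x a b z) := by
  rw [treeSum_succ, treeSum, map_sum, mul_sum, mul_sum, ← sum_add_distrib]
  refine sum_congr rfl fun p hp => ?_
  rw [(mem_trees.1 hp).treeWeight_eq, mul_derivation_monomial D hx ha hb hz]
  ring

lemma treeSum_swap_of_derivation (D : Derivation ℤ R R) (hx : D x = 0) (ha : D a = 1)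
    (hb : D b = 1) (hz : D z = 0) (m : ℕ) :
    treeSum m x a b z = treeSum m x b a (z + a - b) := by
  have hz' : D (z + a - b) = 0 := by rw [map_sub, map_add, hz, ha, hb, zero_add, sub_self]
  induction m with
  | zero => rw [treeSum_zero, treeSum_zero]
  | succ m ih =>
    rw [treeSum_succ_eq_derivation D hx ha hb hz, treeSum_succ_eq_derivation D hx hb ha hz', ih]
    ring

lemma treeSum_swap (m : ℕ) (x a b z : R) : treeSum m x a b z = treeSum m x b a (z + a - b) := by
  let D := mkDerivation ℤ (![0, 1, 1, 0] : Fin 4 → MvPolynomial (Fin 4) ℤ)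
  have h := treeSum_swap_of_derivation D (x := X 0) (a := X 1) (b := X 2) (z := X 3)
    (mkDerivation_X ..) (mkDerivation_X ..) (mkDerivation_X ..) (mkDerivation_X ..) m
  simpa [map_treeSum] using
    congrArg (aeval ![x, a, b, z] : MvPolynomial (Fin 4) ℤ →ₐ[ℤ] R).toRingHom h

end Weight

lemma treeSum_add_swap {R : Type*} [CommSemiring R] (m : ℕ) (x b z s : R) :
    treeSum m x (b + s) b z = treeSum m x b (b + s) (z + s) := by
  have h : treeSum m (X 0) (X 1 + X 3) (X 1) (X 2) =
      treeSum m (X 0 : MvPolynomial (Fin 4) ℕ) (X 1) (X 1 + X 3) (X 2 + X 3) := by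
    apply map_injective (Nat.castRingHom ℤ) Nat.cast_injective
    rw [map_treeSum, map_treeSum, treeSum_swap]
    congr 1
    simp only [map_add, map_X]
    ring
  simpa [map_treeSum] using
    congrArg (aeval ![x, b, z, s] : MvPolynomial (Fin 4) ℕ →ₐ[ℕ] R).toRingHom h

section Reattach

variable {m : ℕ} {p q : ℕ → ℕ} {M : Finset ℕ} {c v : ℕ}

/-- The siblings of `c` whose minimal descendant is smaller than that of `c`. -/
def smallerSiblings (m : ℕ) (p : ℕ → ℕ) (c : ℕ) : Finset ℕ :=
  {d ∈ Icc 1 m | p d = p c ∧ minDesc p d < minDesc p c}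

lemma mem_smallerSiblings {d : ℕ} : d ∈ smallerSiblings m p c ↔
    (1 ≤ d ∧ d ≤ m) ∧ p d = p c ∧ minDesc p d < minDesc p c := by
  rw [smallerSiblings, mem_filter, mem_Icc]

/-- The tree `q` arises from `p` by simultaneously moving some vertices below siblings with smaller
minimal descendants. -/
def IsReattachment (m : ℕ) (p q : ℕ → ℕ) : Prop :=
  ∀ c, q c = p c ∨ c ∈ Icc 1 m ∧ q c ∈ smallerSiblings m p c

lemma IsReattachment.reaches_zero (h : IsReattachment m p q) (hp : IsTree p) (v : ℕ) :
    Reaches q v 0 := by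
  induction v using hp.induction with
  | zero => exact .refl q 0
  | map v hv0 ih =>
    induction hn : minDesc p v using Nat.strong_induction_on generalizing v with
    | _ n ihn =>
      refine Reaches.of_map ?_
      rcases h v with hv | ⟨-, hv⟩
      · exact hv ▸ ih
      · obtain ⟨⟨h1, -⟩, hpd, hlt⟩ := mem_smallerSiblings.1 hv
        exact ihn _ (hn ▸ hlt) (q v) (Nat.one_le_iff_ne_zero.1 h1) (hpd ▸ ih) rfl

lemma IsReattachment.isTreeOn (h : IsReattachment m p q) (hp : IsTreeOn m p) : IsTreeOn m q := by
  have outside : ∀ c ∉ Icc 1 m, q c = p c := fun c hc => (h c).resolve_right fun h' => hc h'.1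
  refine ⟨⟨?_, h.reaches_zero hp.toIsTree⟩, fun v => ?_, fun v hv => ?_⟩
  · rw [outside 0 (by simp), hp.map_zero]
  · rcases h v with hv | ⟨-, hv⟩
    · exact hv ▸ hp.le v
    · exact (mem_smallerSiblings.1 hv).1.2
  · rw [outside v (by simp [hv]), hp.map_eq_zero v hv]

lemma IsReattachment.minDesc_eq (h : IsReattachment m p q) : minDesc q = minDesc p := by
  refine minDesc_congr (fun v => ?_) fun v hv => ?_
  · rcases h v with hqv | ⟨-, hqv⟩
    · exact hqv ▸ minDesc_map_le p v
    · exact (mem_smallerSiblings.1 hqv).2.2.le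
  · refine (h v).resolve_right fun ⟨_, hqv⟩ => ?_
    obtain ⟨-, hpd, hlt⟩ := mem_smallerSiblings.1 hqv
    exact (minDesc_map_le p (q v)).not_gt (by rwa [hpd, hv])

lemma IsReattachment.map_eq (h : IsReattachment m p q) (hc : p c ≠ q c) : p c = p (q c) :=
  (mem_smallerSiblings.1 ((h c).resolve_left hc.symm).2).2.1.symm

lemma IsTreeOn.map_notMem_smallerSiblings (hp : IsTreeOn m p) (c : ℕ) :
    p c ∉ smallerSiblings m p c := fun h => by
  obtain ⟨⟨h1, -⟩, hpc, -⟩ := mem_smallerSiblings.1 h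
  exact hp.map_ne_self (by omega) hpc

open scoped Classical in
/-- The reattachments of a fixed tree choose the new parents independently of each other. -/
lemma IsTreeOn.sum_isReattachment {R : Type*} [CommSemiring R] (hp : IsTreeOn m p)
    (f : ℕ → R) (s : R) :
    ∑ q ∈ trees m with IsReattachment m p q, ∏ c ∈ Icc 1 m, (if q c = p c then f c else s) =
      ∏ c ∈ Icc 1 m, (f c + #(smallerSiblings m p c) * s) := by
  have hsum : ∀ c ∈ Icc 1 m, f c + #(smallerSiblings m p c) * s =
      ∑ w ∈ insert (p c) (smallerSiblings m p c), if w = p c then f c else s := by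
    intro c _
    have hpc := hp.map_notMem_smallerSiblings c
    have hne : ∀ w ∈ smallerSiblings m p c, w ≠ p c := fun w hw h => hpc (h ▸ hw)
    rw [sum_insert hpc, if_pos rfl, sum_congr rfl fun w hw => if_neg (hne w hw), sum_const,
      nsmul_eq_mul]
  rw [prod_congr rfl hsum, prod_sum]
  refine sum_bij' (fun q _ c _ => q c) (fun g _ c => if hc : c ∈ Icc 1 m then g c hc else p c)
    (fun q hq => ?_) (fun g hg => ?_) (fun q hq => ?_) (fun g _ => ?_) fun q _ => ?_
  · rw [mem_pi]
    exact fun c _ => mem_insert.2 (((mem_filter.1 hq).2 c).imp_right And.right)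
  · have h : IsReattachment m p fun c => if hc : c ∈ Icc 1 m then g c hc else p c := fun c => by
      dsimp only
      split_ifs with hc
      · exact (mem_insert.1 (mem_pi.1 hg c hc)).imp_right fun hgc => ⟨hc, hgc⟩
      · exact .inl rfl
    exact mem_filter.2 ⟨mem_trees.2 (h.isTreeOn hp), h⟩
  · funext c
    split_ifs with hc
    · rfl
    · exact (((mem_filter.1 hq).2 c).resolve_right fun h => hc h.1).symm
  · funext c hc
    exact dif_pos hc
  · exact (prod_attach (Icc 1 m) fun c => if q c = p c then f c else s).symm

/-- The vertices of `q` that a reattachment may have moved to their place in `q`. -/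
def movable (m : ℕ) (q : ℕ → ℕ) : Finset ℕ :=
  {c ∈ Icc 1 m | q c ≠ 0 ∧ minDesc q (q c) ≠ minDesc q c}

lemma mem_movable : c ∈ movable m q ↔
    c ∈ Icc 1 m ∧ q c ≠ 0 ∧ minDesc q (q c) ≠ minDesc q c := by
  rw [movable, mem_filter]

lemma IsReattachment.mem_movable (h : IsReattachment m p q) (hc : p c ≠ q c) :
    c ∈ movable m q := by
  obtain ⟨hcm, hqc⟩ := (h c).resolve_left hc.symm
  obtain ⟨⟨h1, -⟩, -, hlt⟩ := mem_smallerSiblings.1 hqc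
  exact LabelledTree.mem_movable.2 ⟨hcm, by omega, by rw [h.minDesc_eq]; exact hlt.ne⟩

/-- Moving the vertices in `M` back up, next to their parents, undoes a reattachment. -/
lemma IsTree.exists_detachment (hq : IsTree q) (hM : 0 ∉ M) :
    ∃ p : ℕ → ℕ, ∀ v, p v = if v ∈ M then p (q v) else q v := by
  refine ⟨fun v => q (q^[sInf {k | q^[k] v ∉ M}] v), fun v => ?_⟩
  dsimp only
  split_ifs with hv
  · obtain ⟨k, hk⟩ := hq.reaches_zero v
    have hpos : 1 ≤ sInf {k | q^[k] v ∉ M} := by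
      refine le_csInf ⟨k, show q^[k] v ∉ M from hk ▸ hM⟩ fun l hl => Nat.one_le_iff_ne_zero.2 ?_
      rintro rfl
      exact hl hv
    rw [← Nat.sInf_add hpos]
    rfl
  · rw [Nat.sInf_eq_zero.2 (.inl hv), iterate_zero_apply]

lemma IsTreeOn.isTreeOn_of_detachment (hq : IsTreeOn m q) (hM : M ⊆ movable m q)
    (hdet : ∀ v, p v = if v ∈ M then p (q v) else q v) : IsTreeOn m p := by
  have outside : ∀ c ∉ Icc 1 m, p c = q c := fun c hc => by
    rw [hdet, if_neg fun hcM => hc (mem_movable.1 (hM hcM)).1]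
  have hp0 : p 0 = 0 := by rw [outside 0 (by simp), hq.map_zero]
  refine ⟨⟨hp0, fun v => ?_⟩, fun v => ?_, fun v hv => ?_⟩
  · induction v using hq.induction with
    | zero => exact .refl p 0
    | map v _ ih =>
      refine Reaches.of_map ?_
      rw [hdet]
      split_ifs
      · exact (reaches_map_zero_iff hp0).2 ih
      · exact ih
  · induction v using hq.induction with
    | zero => exact hp0.trans_le m.zero_le
    | map v _ ih =>
      rw [hdet]
      split_ifs
      · exact ih
      · exact hq.le v
  · rw [outside v (by simp [hv]), hq.map_eq_zero v hv]

lemma IsTreeOn.minDesc_eq_of_detachment (hq : IsTreeOn m q) (hM : M ⊆ movable m q)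
    (hdet : ∀ v, p v = if v ∈ M then p (q v) else q v) : minDesc p = minDesc q := by
  have hanc : ∀ v, Reaches q (q v) (p v) := fun v => by
    induction v using hq.induction with
    | zero =>
      rw [(hq.isTreeOn_of_detachment hM hdet).map_zero, hq.map_zero]
      exact .refl q 0
    | map v _ ih =>
      rw [hdet]
      split_ifs
      · exact ih.of_map
      · exact .refl q (q v)
  refine minDesc_congr (fun v => minDesc_anti (hanc v).of_map) fun v hv => ?_
  rw [hdet, if_neg fun hvM => (mem_movable.1 (hM hvM)).2.2 hv]

lemma IsTreeOn.isReattachment_of_detachment (hq : IsTreeOn m q) (hM : M ⊆ movable m q)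
    (hdet : ∀ v, p v = if v ∈ M then p (q v) else q v) : IsReattachment m p q := by
  intro c
  by_cases hc : c ∈ M
  · obtain ⟨hcm, hqc, hne⟩ := mem_movable.1 (hM hc)
    refine .inr ⟨hcm, mem_smallerSiblings.2 ⟨⟨by omega, hq.le c⟩, ?_, ?_⟩⟩
    · rw [hdet c, if_pos hc]
    · rw [hq.minDesc_eq_of_detachment hM hdet]
      exact (minDesc_map_le q c).lt_of_ne hne
  · exact .inl (by rw [hdet, if_neg hc])

lemma IsTreeOn.map_ne_iff_of_detachment (hq : IsTreeOn m q) (hM : M ⊆ movable m q)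
    (hdet : ∀ v, p v = if v ∈ M then p (q v) else q v) : p c ≠ q c ↔ c ∈ M := by
  rw [hdet]
  split_ifs with hc
  · have hqc := (mem_movable.1 (hM hc)).2.1
    exact iff_of_true ((hq.isTreeOn_of_detachment hM hdet).map_ne_self hqc) hc
  · exact iff_of_false (not_not.2 rfl) hc

lemma IsReattachment.map_eq_ite [DecidablePred fun c => p c ≠ q c] (h : IsReattachment m p q)
    (v : ℕ) : p v = if v ∈ {c ∈ Icc 1 m | p c ≠ q c} then p (q v) else q v := by
  split_ifs with hv
  · exact h.map_eq (mem_filter.1 hv).2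
  · by_contra hne
    exact hv (mem_filter.2 ⟨((h v).resolve_left (Ne.symm hne)).1, hne⟩)

lemma sum_powerset_prod_ite {ι R : Type*} [DecidableEq ι] [CommSemiring R] {s t : Finset ι}
    (hst : s ⊆ t) (f : ι → R) (r : R) :
    ∑ u ∈ s.powerset, ∏ i ∈ t, (if i ∈ u then r else f i) =
      ∏ i ∈ t, (f i + if i ∈ s then r else 0) := by
  simp_rw [add_comm (f _)]
  rw [prod_add]
  refine sum_subset_zero_on_sdiff (powerset_mono.2 hst) (fun u hu => ?_) fun u hu => ?_
  · obtain ⟨-, hus⟩ := mem_sdiff.1 hu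
    obtain ⟨i, hiu, his⟩ := not_subset.1 (mt mem_powerset.2 hus)
    rw [prod_eq_zero hiu (if_neg his), zero_mul]
  · rw [mem_powerset] at hu
    rw [prod_congr rfl fun i hi => if_pos (hu hi), prod_ite, filter_mem_eq_inter,
      inter_eq_right.2 (hu.trans hst), filter_notMem_eq_sdiff]

open scoped Classical in
lemma IsTreeOn.sum_isReattachment_left {R : Type*} [CommSemiring R] (hq : IsTreeOn m q)
    (f : ℕ → R) (s : R) :
    ∑ p ∈ trees m with IsReattachment m p q, ∏ c ∈ Icc 1 m, (if q c = p c then f c else s) =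
      ∏ c ∈ Icc 1 m, (f c + if c ∈ movable m q then s else 0) := by
  rw [← sum_powerset_prod_ite (show movable m q ⊆ Icc 1 m from filter_subset _ _)]
  refine sum_bij (fun p _ => {c ∈ Icc 1 m | p c ≠ q c}) (fun p hp => ?_) (fun p hp p' hp' h => ?_)
    (fun M hM => ?_) fun p _ => prod_congr rfl fun c hc => ?_
  · rw [mem_powerset]
    exact fun c hc => (mem_filter.1 hp).2.mem_movable (mem_filter.1 hc).2
  · have hrec := (mem_filter.1 hp).2.map_eq_ite
    have hrec' := (mem_filter.1 hp').2.map_eq_ite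
    rw [← h] at hrec'
    funext v
    induction v using hq.induction with
    | zero =>
      rw [(mem_trees.1 (mem_filter.1 hp).1).map_zero, (mem_trees.1 (mem_filter.1 hp').1).map_zero]
    | map v _ ih => rw [hrec, hrec', ih]
  · rw [mem_powerset] at hM
    obtain ⟨p, hdet⟩ := hq.exists_detachment fun h0 : 0 ∈ M => by
      simpa using (mem_movable.1 (hM h0)).1
    refine ⟨p, mem_filter.2 ⟨mem_trees.2 (hq.isTreeOn_of_detachment hM hdet),
      hq.isReattachment_of_detachment hM hdet⟩, ?_⟩
    rw [filter_congr fun c _ => hq.map_ne_iff_of_detachment hM hdet, filter_mem_eq_inter]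
    exact inter_eq_right.2 (hM.trans (filter_subset _ _))
  · simp only [mem_filter, hc, true_and, ne_eq, ite_not, eq_comm]

lemma IsTreeOn.edgeWeight_add_ite_movable {R : Type*} [AddMonoid R] (hq : IsTreeOn m q)
    (hc : c ∈ Icc 1 m) (x y z s : R) :
    (edgeWeight q x y y z c + if c ∈ movable m q then s else 0) =
      edgeWeight q x y (y + s) (z + s) c := by
  have hlt := hq.minDesc_lt_map_of_eq (c := c) (by rw [mem_Icc] at hc; omega)
  rw [edgeWeight, edgeWeight]
  by_cases h0 : q c = 0
  · rw [if_pos h0, if_pos h0, if_neg fun h => (mem_movable.1 h).2.1 h0, add_zero]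
  · by_cases hfirst : minDesc q (q c) = minDesc q c
    · rw [if_neg h0, if_neg h0, if_pos (hlt hfirst), if_pos (hlt hfirst), if_pos hfirst,
        if_pos hfirst, if_neg fun h => (mem_movable.1 h).2.2 hfirst, add_zero]
    · rw [if_neg h0, if_neg h0, if_neg hfirst, if_neg hfirst,
        if_pos (mem_movable.2 ⟨hc, h0, hfirst⟩), ite_add]

open scoped Classical in
lemma sum_prod_edgeWeight_add_smallerSiblings {R : Type*} [CommSemiring R] (m : ℕ)
    (x y z s : R) :
    ∑ p ∈ trees m, ∏ c ∈ Icc 1 m, (edgeWeight p x y y z c + #(smallerSiblings m p c) * s) =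
      treeSum m x y (y + s) (z + s) := by
  have hmem : ∀ p q, p ∈ trees m ∧ q ∈ {q ∈ trees m | IsReattachment m p q} ↔
      p ∈ {p ∈ trees m | IsReattachment m p q} ∧ q ∈ trees m := by
    simp only [mem_filter]
    tauto
  calc _ = ∑ p ∈ trees m, ∑ q ∈ trees m with IsReattachment m p q,
        ∏ c ∈ Icc 1 m, (if q c = p c then edgeWeight p x y y z c else s) :=
      sum_congr rfl fun p hp => ((mem_trees.1 hp).sum_isReattachment _ s).symm
    _ = ∑ q ∈ trees m, ∑ p ∈ trees m with IsReattachment m p q,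
        ∏ c ∈ Icc 1 m, (if q c = p c then edgeWeight p x y y z c else s) := sum_comm' hmem
    _ = ∑ q ∈ trees m, ∑ p ∈ trees m with IsReattachment m p q,
        ∏ c ∈ Icc 1 m, (if q c = p c then edgeWeight q x y y z c else s) := by
      refine sum_congr rfl fun q _ => sum_congr rfl fun p hp => prod_congr rfl fun c _ => ?_
      split_ifs with h
      · rw [edgeWeight, edgeWeight, h, (mem_filter.1 hp).2.minDesc_eq]
      · rfl
    _ = ∑ q ∈ trees m, ∏ c ∈ Icc 1 m,
        (edgeWeight q x y y z c + if c ∈ movable m q then s else 0) :=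
      sum_congr rfl fun q hq => (mem_trees.1 hq).sum_isReattachment_left _ s
    _ = treeSum m x y (y + s) (z + s) := by
      refine sum_congr rfl fun q hq => prod_congr rfl fun c hc => ?_
      exact (mem_trees.1 hq).edgeWeight_add_ite_movable hc x y z s

end Reattach

section NonLeading

variable {m : ℕ} {p : ℕ → ℕ}

open scoped Classical in
/-- The non-leading vertices of a tree on `{0, …, m}`: some `a` on the greater ancestors path of `v`
has a descendant smaller than `v`. As `minDesc p a` decreases along the path, it is enough to look
at its top, as in `CayleyTree.Leading`. -/
def nonLeading (m : ℕ) (p : ℕ → ℕ) : Finset ℕ :=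
  {v ∈ Icc 1 m | ∃ k, (∀ l ≤ k, v ≤ p^[l] v) ∧ minDesc p (p^[k] v) < v}

open scoped Classical in
lemma mem_nonLeading {v : ℕ} : v ∈ nonLeading m p ↔
    (1 ≤ v ∧ v ≤ m) ∧ ∃ k, (∀ l ≤ k, v ≤ p^[l] v) ∧ minDesc p (p^[k] v) < v := by
  rw [nonLeading, mem_filter, mem_Icc]

lemma nonLeading_subset : nonLeading m p ⊆ Icc 1 m := fun _ hv =>
  mem_Icc.2 (mem_nonLeading.1 hv).1

lemma filter_nonLeading_minDesc_ne (m : ℕ) (p : ℕ → ℕ) :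
    {v ∈ nonLeading m p | minDesc p v ≠ v} = improperParents m p := by
  ext v
  rw [mem_filter, mem_nonLeading, mem_improperParents]
  refine ⟨fun h => ⟨h.1.1, h.2⟩, fun h => ⟨⟨h.1, 0, fun l hl => ?_, ?_⟩, h.2⟩⟩
  · rw [Nat.le_zero.1 hl, iterate_zero_apply]
  · exact (minDesc_le p v).lt_of_ne h.2

lemma minDesc_minDesc (p : ℕ → ℕ) (c : ℕ) : minDesc p (minDesc p c) = minDesc p c :=
  (minDesc_le p _).antisymm (minDesc_anti (reaches_minDesc p c))

lemma IsTreeOn.minDesc_mem_nonLeading {c : ℕ} (hp : IsTreeOn m p) (hc : c ∈ improperEdges m p)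
    (hne : minDesc p (p c) ≠ minDesc p c) : minDesc p c ∈ nonLeading m p := by
  rw [mem_improperEdges] at hc
  obtain ⟨k, hk⟩ := reaches_minDesc p c
  have hk' : p^[k + 1] (minDesc p c) = p c := by rw [iterate_succ_apply', hk]
  refine mem_nonLeading.2 ⟨⟨hp.minDesc_pos (by omega), (minDesc_le p c).trans hc.1.2⟩,
    k + 1, fun l hl => ?_, hk' ▸ (minDesc_map_le p c).lt_of_ne hne⟩
  obtain rfl | hl := hl.eq_or_lt
  · exact hk' ▸ hc.2.le
  · refine minDesc_le_of_reaches ⟨k - l, ?_⟩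
    rw [← iterate_add_apply, Nat.sub_add_cancel (Nat.le_of_lt_succ hl), hk]

lemma eq_of_minDesc_eq_of_minDesc_map_ne {c d : ℕ} (hcd : minDesc p c = minDesc p d)
    (hc : minDesc p (p c) ≠ minDesc p c) (hd : minDesc p (p d) ≠ minDesc p d) : c = d := by
  have key : ∀ {c d}, minDesc p c = minDesc p d → minDesc p (p c) ≠ minDesc p c →
      Reaches p c d → c = d := fun {c d} hcd hc hr => hr.eq_or_map.resolve_right fun hr' =>
    hc ((minDesc_map_le p c).antisymm (hcd ▸ minDesc_anti hr'))
  exact ((reaches_minDesc p c).total (hcd ▸ reaches_minDesc p d)).elim (key hcd hc)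
    fun hr => (key hcd.symm hd hr).symm

lemma IsTreeOn.exists_improperEdge_minDesc_eq {v : ℕ} (hp : IsTreeOn m p)
    (hv : v ∈ nonLeading m p) (hmin : minDesc p v = v) :
    ∃ c ∈ improperEdges m p, minDesc p (p c) ≠ minDesc p c ∧ minDesc p c = v := by
  classical
  obtain ⟨⟨hv1, -⟩, k, hk, hlt⟩ := mem_nonLeading.1 hv
  have hex : ∃ k, minDesc p (p^[k] v) < v := ⟨k, hlt⟩
  obtain ⟨j, hj⟩ : ∃ j, Nat.find hex = j + 1 := Nat.exists_eq_succ_of_ne_zero fun h0 => by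
    have := (Nat.find_eq_zero hex).1 h0
    rw [iterate_zero_apply, hmin] at this
    exact this.false
  have hlast := Nat.find_spec hex
  have hprev : v ≤ minDesc p (p^[j] v) := not_lt.1 (Nat.find_min hex (hj ▸ j.lt_succ_self))
  have hge := hk (j + 1) (hj ▸ Nat.find_le hlt)
  rw [hj, iterate_succ_apply'] at hlast
  rw [iterate_succ_apply'] at hge
  have hc : minDesc p (p^[j] v) = v := ((minDesc_le_of_reaches ⟨j, rfl⟩).antisymm hprev)
  have hc0 : p^[j] v ≠ 0 := fun h0 => by
    rw [h0, minDesc_zero] at hc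
    omega
  have hne : p (p^[j] v) ≠ v := fun h => by
    rw [h, hmin] at hlast
    exact hlast.false
  exact ⟨p^[j] v, hp.mem_improperEdges_of_lt hc0 (hc.symm ▸ hge.lt_of_ne hne.symm),
    hc.symm ▸ hlast.ne, hc⟩

lemma IsTreeOn.card_nonLeading (hp : IsTreeOn m p) :
    #(nonLeading m p) = #(improperEdges m p) := by
  have hfirst := card_filter_add_card_filter_not (s := improperEdges m p)
    fun c => minDesc p (p c) = minDesc p c
  have hmin := card_filter_add_card_filter_not (s := nonLeading m p) fun v => minDesc p v = v
  rw [hp.card_firstImproperEdges] at hfirst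
  rw [filter_nonLeading_minDesc_ne] at hmin
  suffices #{c ∈ improperEdges m p | minDesc p (p c) ≠ minDesc p c} =
      #{v ∈ nonLeading m p | minDesc p v = v} by
    simp only [ne_eq] at this hmin
    omega
  refine card_bij (fun c _ => minDesc p c) (fun c hc => ?_) (fun c hc d hd hcd => ?_) fun v hv => ?_
  · rw [mem_filter] at hc ⊢
    exact ⟨hp.minDesc_mem_nonLeading hc.1 hc.2, minDesc_minDesc p c⟩
  · rw [mem_filter] at hc hd
    exact eq_of_minDesc_eq_of_minDesc_map_ne hcd hc.2 hd.2
  · rw [mem_filter] at hv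
    obtain ⟨c, hc, hne, hcv⟩ := hp.exists_improperEdge_minDesc_eq hv.1 hv.2
    exact ⟨c, mem_filter.2 ⟨hc, hne⟩, hcv⟩

lemma IsTreeOn.card_rootChildren_pos (hp : IsTreeOn m p) (hm : m ≠ 0) :
    0 < #(rootChildren m p) := by
  suffices h : ∀ v ≤ m, v ≠ 0 → (rootChildren m p).Nonempty from card_pos.2 (h m le_rfl hm)
  intro v
  induction v using hp.induction with
  | zero => exact fun _ h => absurd rfl h
  | map v hv0 ih =>
    intro hvm _
    by_cases hpv : p v = 0
    · exact ⟨v, mem_rootChildren.2 ⟨⟨Nat.one_le_iff_ne_zero.2 hv0, hvm⟩, hpv⟩⟩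
    · exact ih (hp.le v) hpv

end NonLeading

section CayleyTree

variable {m : ℕ} (T : CayleyTree (m + 1))

lemma isTreeOn_cayleyTree : IsTreeOn m (natMap T.1) := isTreeOn_natMap_iff.2 T.2

lemma beta_cayleyTree (a : Fin (m + 1)) : T.beta a = minDesc (natMap T.1) a :=
  sInf_descendants_eq_minDesc T.1 a

lemma impe_cayleyTree : T.impe = #(improperEdges m (natMap T.1)) := by
  refine ncard_setOf_eq_card (filter_subset _ _) fun c => ?_
  rw [CayleyTree.ImproperEdge, beta_cayleyTree, mem_improperEdges, natMap_val]
  omega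

lemma impp_cayleyTree : T.impp = #(improperParents m (natMap T.1)) := by
  refine ncard_setOf_eq_card (filter_subset _ _) fun c => ?_
  have := minDesc_le (natMap T.1) c
  rw [CayleyTree.ImproperParent, beta_cayleyTree, mem_improperParents]
  omega

lemma degRoot_cayleyTree : T.degRoot = #(rootChildren m (natMap T.1)) := by
  refine ncard_setOf_eq_card (filter_subset _ _) fun c => ?_
  rw [mem_rootChildren, natMap_val]
  omega

lemma leading_cayleyTree_iff (i : Fin (m + 1)) :
    T.Leading i ↔ (i : ℕ) ∉ nonLeading m (natMap T.1) := by
  have hbap : ∀ l ≤ T.bapLen i, i ≤ T.1^[l] i :=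
    Nat.findGreatest_spec (P := fun k => ∀ l ≤ k, i ≤ T.1^[l] i) (Nat.zero_le _) fun l hl => by
      rw [Nat.le_zero.1 hl, iterate_zero_apply]
  rw [CayleyTree.Leading, beta_cayleyTree, ← natMap_iterate_val, mem_nonLeading, iff_not_comm]
  constructor
  · rintro ⟨⟨hi, -⟩, k, hk, hlt⟩
    have hle : k ≤ T.bapLen i := by
      refine Nat.le_findGreatest ?_ fun l hl => ?_
      · obtain ⟨k₀, hk₀, hroot⟩ := T.2.2 i
        by_contra! hkm
        have := hk k₀ (by omega)
        rw [natMap_iterate_val, hroot] at this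
        omega
      · have := hk l hl
        rwa [natMap_iterate_val] at this
    refine ((minDesc_anti ⟨T.bapLen i - k, ?_⟩).trans_lt hlt).ne
    rw [← iterate_add_apply, Nat.sub_add_cancel hle]
  · intro hne
    have hlt := (minDesc_le_of_reaches (p := natMap T.1) ⟨T.bapLen i, rfl⟩).lt_of_ne hne
    refine ⟨⟨by omega, by omega⟩, T.bapLen i, fun l hl => ?_, hlt⟩
    rw [natMap_iterate_val]
    exact hbap l hl

lemma lead_add_impe_cayleyTree : T.lead + T.impe = m + 1 := by
  have hcompl : {i | ¬T.Leading i}.ncard = #(nonLeading m (natMap T.1)) :=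
    ncard_setOf_eq_card nonLeading_subset fun i => by rw [leading_cayleyTree_iff, not_not]
  rw [impe_cayleyTree, ← (isTreeOn_cayleyTree T).card_nonLeading, ← hcompl, CayleyTree.lead,
    ← Set.compl_ofPred, Set.ncard_add_ncard_compl, Nat.card_eq_fintype_card, Fintype.card_fin]

lemma mul_sum_cayleyTree {R : Type*} [CommSemiring R] (hm : m ≠ 0) (x y z t : R) :
    x * ∑ T : CayleyTree (m + 1), y ^ T.impe * (t + 1) ^ T.impp * x ^ (T.degRoot - 1) *
      z ^ (T.lead - T.degRoot - 1) = treeSum m x (y * (t + 1)) y z := by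
  rw [treeSum, ← sum_cayleyTree_natMap, mul_sum]
  refine sum_congr rfl fun T _ => ?_
  have hT := isTreeOn_cayleyTree T
  have hlead := lead_add_impe_cayleyTree T
  rw [hT.treeWeight_eq, ← impe_cayleyTree, ← impp_cayleyTree, ← degRoot_cayleyTree,
    show m - T.impe - T.degRoot = T.lead - T.degRoot - 1 by omega, mul_pow]
  have hdeg : x ^ T.degRoot = x * x ^ (T.degRoot - 1) := by
    rw [← pow_succ', Nat.sub_add_cancel (degRoot_cayleyTree T ▸ hT.card_rootChildren_pos hm)]
  have himp : y ^ T.impe = y ^ T.impp * y ^ (T.impe - T.impp) := by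
    rw [← pow_add, Nat.add_sub_cancel' ?_]
    rw [impe_cayleyTree, impp_cayleyTree]
    exact hT.card_improperParents_le
  rw [hdeg, himp]
  ring

end CayleyTree

section InversionCode

variable {ι α : Type*} [LinearOrder α] {S : Finset ι} {b : ι → α} {r r' : ι → ℕ} {a c : ι} {k : ℕ}

/-- `r` numbers the elements of `S` by `0, …, #S - 1`, i.e. it lists `S` as a sequence. -/
structure IsRanking (S : Finset ι) (r : ι → ℕ) : Prop where
  injOn : Set.InjOn r S
  lt_card : ∀ c ∈ S, r c < #S

/-- The inversion code of the sequence listed by `r`: the number of elements to the right of `c`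
with a smaller value of `b`. -/
def invCode (S : Finset ι) (b : ι → α) (r : ι → ℕ) (c : ι) : ℕ := #{d ∈ S | b d < b c ∧ r c < r d}

lemma invCode_le (S : Finset ι) (b : ι → α) (r : ι → ℕ) (c : ι) :
    invCode S b r c ≤ #{d ∈ S | b d < b c} :=
  card_le_card (monotone_filter_right S fun _ _ h => h.1)

lemma invCode_congr (hc : c ∈ S) (h : ∀ c ∈ S, ∀ d ∈ S, (r c < r d ↔ r' c < r' d)) :
    invCode S b r c = invCode S b r' c := by
  rw [invCode, invCode, filter_congr fun d hd => and_congr_right' (h c hc d hd)]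

lemma invCode_insert_of_lt [DecidableEq ι] (hc : b c < b a) :
    invCode (insert a S) b r c = invCode S b r c := by
  rw [invCode, filter_insert, if_neg fun h => h.1.not_gt hc, invCode]

lemma invCode_insert_self [DecidableEq ι] (ha : ∀ d ∈ S, b d < b a) :
    invCode (insert a S) b r a = #{d ∈ S | r a < r d} := by
  rw [invCode, filter_insert, if_neg fun h => h.1.false,
    filter_congr fun d hd => and_iff_right (ha d hd)]

lemma IsRanking.image_eq (hr : IsRanking S r) : S.image r = range #S := by
  refine eq_of_subset_of_card_le (image_subset_iff.2 fun c hc => mem_range.2 (hr.lt_card c hc)) ?_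
  rw [card_image_of_injOn hr.injOn, card_range]

lemma IsRanking.card_filter_lt (hr : IsRanking S r) (hk : k ≤ #S) : #{d ∈ S | r d < k} = k := by
  have himage : {d ∈ S | r d < k}.image r = range k := by
    rw [← filter_image (p := (· < k)), hr.image_eq]
    ext i
    rw [mem_filter, mem_range, mem_range]
    omega
  rw [← card_image_of_injOn (hr.injOn.mono (filter_subset _ S)), himage, card_range]

lemma isRanking_iff : IsRanking S r ↔
    Set.InjOn r S ∧ ∀ c ∈ S, ∀ i < r c, ∃ d ∈ S, r d = i := by
  refine ⟨fun hr => ⟨hr.injOn, fun c hc i hi => ?_⟩, fun ⟨hinj, hex⟩ => ⟨hinj, fun c hc => ?_⟩⟩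
  · rw [← mem_image, hr.image_eq]
    exact mem_range.2 (hi.trans (hr.lt_card c hc))
  · have hsub : range (r c + 1) ⊆ S.image r := fun i hi => mem_image.2 <|
      (Nat.lt_succ_iff_lt_or_eq.1 (mem_range.1 hi)).elim (hex c hc i) fun h => ⟨c, hc, h.symm⟩
    simpa only [card_range, card_image_of_injOn hinj, Nat.succ_le_iff] using card_le_card hsub

lemma IsRanking.exists_insert [DecidableEq ι] (hr : IsRanking S r) (ha : a ∉ S) (hk : k ≤ #S) :
    ∃ r', IsRanking (insert a S) r' ∧ #{d ∈ S | r' a < r' d} = k ∧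
      ∀ c ∈ S, ∀ d ∈ S, (r' c < r' d ↔ r c < r d) := by
  obtain ⟨j, hj⟩ := Nat.exists_eq_add_of_le' hk
  let r' : ι → ℕ := fun d => if d = a then j else if r d < j then r d else r d + 1
  have hself : r' a = j := if_pos rfl
  have hother : ∀ d ∈ S, r' d = if r d < j then r d else r d + 1 := fun d hd =>
    if_neg (ne_of_mem_of_not_mem hd ha)
  refine ⟨r', ⟨fun c hc d hd hcd => ?_, fun c hc => ?_⟩, ?_, fun c hc d hd => ?_⟩
  · obtain rfl | hcS := mem_insert.1 hc <;> obtain rfl | hdS := mem_insert.1 hd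
    · rfl
    · rw [hself, hother d hdS] at hcd
      split_ifs at hcd <;> omega
    · rw [hself, hother c hcS] at hcd
      split_ifs at hcd <;> omega
    · rw [hother c hcS, hother d hdS] at hcd
      exact hr.injOn hcS hdS (by split_ifs at hcd <;> omega)
  · rw [card_insert_of_notMem ha]
    obtain rfl | hcS := mem_insert.1 hc
    · omega
    · have := hr.lt_card c hcS
      rw [hother c hcS]
      split_ifs <;> omega
  · have hlow := hr.card_filter_lt (k := j) (by omega)
    have hsplit := card_filter_add_card_filter_not (s := S) (fun d => r d < j)
    rw [filter_congr (q := fun d => ¬r d < j) fun d hd => by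
      rw [hself, hother d hd]
      split_ifs <;> omega]
    omega
  · rw [hother c hc, hother d hd]
    split_ifs <;> omega

lemma exists_isRanking_invCode_eq (hb : Set.InjOn b S) {e : ι → ℕ}
    (he : ∀ c ∈ S, e c ≤ #{d ∈ S | b d < b c}) :
    ∃ r, IsRanking S r ∧ ∀ c ∈ S, invCode S b r c = e c := by
  classical
  induction S using Finset.induction_on_max_value b with
  | empty => exact ⟨0, ⟨by simp, by simp⟩, by simp⟩
  | insert a S ha hmax ih =>
    have hlt : ∀ c ∈ S, b c < b a := fun c hc => (hmax c hc).lt_of_ne fun h =>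
      ha (hb (mem_insert_of_mem hc) (mem_insert_self a S) h ▸ hc)
    obtain ⟨r, hr, hcode⟩ := ih (hb.mono (coe_subset.2 (subset_insert a S))) fun c hc => by
      simpa only [filter_insert, if_neg (hlt c hc).not_gt] using he c (mem_insert_of_mem hc)
    have hea : e a ≤ #S := by
      have := he a (mem_insert_self a S)
      rw [filter_insert, if_neg (lt_irrefl _)] at this
      exact this.trans (card_filter_le _ _)
    obtain ⟨r', hr', hcard, hiff⟩ := hr.exists_insert ha hea
    refine ⟨r', hr', fun c hc => ?_⟩
    obtain rfl | hcS := mem_insert.1 hc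
    · rw [invCode_insert_self hlt, hcard]
    · rw [invCode_insert_of_lt (hlt c hcS), invCode_congr hcS hiff, hcode c hcS]

lemma lt_of_card_filter_lt_le (hcard : #{d ∈ S | r a < r d} ≤ #{d ∈ S | r' a < r' d})
    (h : ∀ c ∈ S, ∀ d ∈ S, r' c < r' d → r c < r d) (hc : c ∈ S) (hac : r a < r c) :
    r' a < r' c := by
  by_contra! hca
  refine (card_lt_card ?_).not_ge hcard
  refine (ssubset_iff_of_subset fun d hd => ?_).2 ⟨c, mem_filter.2 ⟨hc, hac⟩, fun hc' =>
    (mem_filter.1 hc').2.not_ge hca⟩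
  obtain ⟨hdS, had⟩ := mem_filter.1 hd
  exact mem_filter.2 ⟨hdS, hac.trans (h c hc d hdS (hca.trans_lt had))⟩

lemma lt_iff_lt_of_invCode_eq (hb : Set.InjOn b S) (hr : Set.InjOn r S) (hr' : Set.InjOn r' S)
    (h : ∀ c ∈ S, invCode S b r c = invCode S b r' c) :
    ∀ c ∈ S, ∀ d ∈ S, (r c < r d ↔ r' c < r' d) := by
  classical
  induction S using Finset.induction_on_max_value b with
  | empty => simp
  | insert a S ha hmax ih =>
    have hlt : ∀ c ∈ S, b c < b a := fun c hc => (hmax c hc).lt_of_ne fun h =>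
      ha (hb (mem_insert_of_mem hc) (mem_insert_self a S) h ▸ hc)
    have hsub : (S : Set ι) ⊆ ↑(insert a S) := coe_subset.2 (subset_insert a S)
    have hold := ih (hb.mono hsub) (hr.mono hsub) (hr'.mono hsub) fun c hc => by
      simpa only [invCode_insert_of_lt (hlt c hc)] using h c (mem_insert_of_mem hc)
    have hcard : #{d ∈ S | r a < r d} = #{d ∈ S | r' a < r' d} := by
      simpa only [invCode_insert_self hlt] using h a (mem_insert_self a S)
    have hnew : ∀ d ∈ S, (r a < r d ↔ r' a < r' d) := fun d hd =>
      ⟨lt_of_card_filter_lt_le hcard.le (fun c hc d hd => (hold c hc d hd).2) hd,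
        lt_of_card_filter_lt_le hcard.ge (fun c hc d hd => (hold c hc d hd).1) hd⟩
    have hne : ∀ d ∈ S, r a ≠ r d ∧ r' a ≠ r' d := fun d hd =>
      have had : a ≠ d := (ne_of_mem_of_not_mem hd ha).symm
      ⟨hr.ne (mem_insert_self a S) (hsub hd) had, hr'.ne (mem_insert_self a S) (hsub hd) had⟩
    intro c hc d hd
    obtain rfl | hcS := mem_insert.1 hc <;> obtain rfl | hdS := mem_insert.1 hd
    · simp only [lt_self_iff_false]
    · exact hnew d hdS
    · have := hnew c hcS
      have := hne c hcS
      omega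
    · exact hold c hcS d hdS

lemma IsRanking.eq_of_invCode_eq (hb : Set.InjOn b S) (hr : IsRanking S r) (hr' : IsRanking S r')
    (h : ∀ c ∈ S, invCode S b r c = invCode S b r' c) (hc : c ∈ S) : r c = r' c := by
  rw [← hr.card_filter_lt (hr.lt_card c hc).le, ← hr'.card_filter_lt (hr'.lt_card c hc).le,
    filter_congr fun d hd => lt_iff_lt_of_invCode_eq hb hr.injOn hr'.injOn h d hd c hc]

end InversionCode

section SiblingRanking

variable {m : ℕ} {p r r' : ℕ → ℕ} {a c : ℕ}

/-- The children of the vertex `a`. -/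
def children (m : ℕ) (p : ℕ → ℕ) (a : ℕ) : Finset ℕ := {d ∈ Icc 1 m | p d = a}

lemma mem_children {d : ℕ} : d ∈ children m p a ↔ d ∈ Icc 1 m ∧ p d = a := by
  rw [children, mem_filter]

lemma filter_children_minDesc_lt (m : ℕ) (p : ℕ → ℕ) (c : ℕ) :
    {d ∈ children m p (p c) | minDesc p d < minDesc p c} = smallerSiblings m p c := by
  rw [children, filter_filter, smallerSiblings]

lemma IsTreeOn.injOn_minDesc_children (hp : IsTreeOn m p) (a : ℕ) :
    Set.InjOn (minDesc p) (children m p a) := fun c hc d hd h => by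
  obtain ⟨hcm, hca⟩ := mem_children.1 hc
  obtain ⟨hdm, hda⟩ := mem_children.1 hd
  rw [mem_Icc] at hcm hdm
  exact hp.eq_of_minDesc_eq (by omega) (by omega) (hca.trans hda.symm) h

/-- `r` gives the children of each vertex of `p` their positions in a linear order; it vanishes
outside `{1, …, m}` to be determined by these orders. -/
structure IsSiblingRanking (m : ℕ) (p r : ℕ → ℕ) : Prop where
  eq_zero : ∀ c ∉ Icc 1 m, r c = 0
  isRanking : ∀ a, IsRanking (children m p a) r

/-- The number of siblings of `c` to its right with a smaller minimal descendant. -/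
def siblingCode (m : ℕ) (p r : ℕ → ℕ) (c : ℕ) : ℕ := invCode (children m p (p c)) (minDesc p) r c

lemma siblingCode_le (m : ℕ) (p r : ℕ → ℕ) (c : ℕ) :
    siblingCode m p r c ≤ #(smallerSiblings m p c) :=
  filter_children_minDesc_lt m p c ▸ invCode_le _ _ _ _

lemma IsSiblingRanking.le (hr : IsSiblingRanking m p r) (c : ℕ) : r c ≤ m := by
  by_cases hc : c ∈ Icc 1 m
  · have hlt := (hr.isRanking (p c)).lt_card c (mem_children.2 ⟨hc, rfl⟩)
    have hle : #(children m p (p c)) ≤ #(Icc 1 m) := card_filter_le _ _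
    rw [Nat.card_Icc] at hle
    omega
  · rw [hr.eq_zero c hc]
    exact m.zero_le

lemma IsSiblingRanking.eq_of_siblingCode_eq (hr : IsSiblingRanking m p r)
    (hr' : IsSiblingRanking m p r') (hp : IsTreeOn m p)
    (h : ∀ c ∈ Icc 1 m, siblingCode m p r c = siblingCode m p r' c) : r = r' := by
  funext c
  by_cases hc : c ∈ Icc 1 m
  · refine (hr.isRanking (p c)).eq_of_invCode_eq (hp.injOn_minDesc_children _)
      (hr'.isRanking (p c)) (fun d hd => ?_) (mem_children.2 ⟨hc, rfl⟩)
    obtain ⟨hdm, hdc⟩ := mem_children.1 hd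
    exact hdc ▸ h d hdm
  · rw [hr.eq_zero c hc, hr'.eq_zero c hc]

lemma IsTreeOn.exists_isSiblingRanking (hp : IsTreeOn m p) {e : ℕ → ℕ}
    (he : ∀ c ∈ Icc 1 m, e c ≤ #(smallerSiblings m p c)) :
    ∃ r, IsSiblingRanking m p r ∧ ∀ c ∈ Icc 1 m, siblingCode m p r c = e c := by
  have hex : ∀ a, ∃ r, IsRanking (children m p a) r ∧
      ∀ c ∈ children m p a, invCode (children m p a) (minDesc p) r c = e c := fun a =>
    exists_isRanking_invCode_eq (hp.injOn_minDesc_children a) fun c hc => by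
      obtain ⟨hcm, rfl⟩ := mem_children.1 hc
      exact filter_children_minDesc_lt m p c ▸ he c hcm
  choose r hr hcode using hex
  let r' : ℕ → ℕ := fun c => if c ∈ Icc 1 m then r (p c) c else 0
  have hr' : ∀ a, ∀ c ∈ children m p a, r' c = r a c := fun a c hc => by
    obtain ⟨hcm, rfl⟩ := mem_children.1 hc
    exact if_pos hcm
  refine ⟨r', ⟨fun c hc => if_neg hc, fun a => ⟨?_, fun c hc => ?_⟩⟩, fun c hc => ?_⟩
  · exact (hr a).injOn.congr fun c hc => (hr' a c hc).symm
  · exact hr' a c hc ▸ (hr a).lt_card c hc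
  · have hcc : c ∈ children m p (p c) := mem_children.2 ⟨hc, rfl⟩
    rw [← hcode _ c hcc, siblingCode]
    exact invCode_congr hcc fun c hc d hd => by rw [hr' _ c hc, hr' _ d hd]

lemma mem_children_natMap {f : Fin (m + 1) → Fin (m + 1)} : c ∈ children m (natMap f) a ↔
    ∃ v : Fin (m + 1), v.val ≠ 0 ∧ (f v).val = a ∧ v.val = c := by
  rw [mem_children, mem_Icc]
  constructor
  · rintro ⟨⟨hc1, hcm⟩, rfl⟩
    exact ⟨⟨c, by omega⟩, Nat.one_le_iff_ne_zero.1 hc1, (natMap_val f _).symm, rfl⟩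
  · rintro ⟨v, hv, rfl, rfl⟩
    exact ⟨by omega, natMap_val f v⟩

/-- The right-hand side consists of the conditions on the ranks in `PlanarTree`. -/
lemma isSiblingRanking_natMap_iff {f g : Fin (m + 1) → Fin (m + 1)} :
    IsSiblingRanking m (natMap f) (natMap g) ↔ (∀ v, v.val = 0 → (g v).val = 0) ∧
      (∀ c d, c.val ≠ 0 → d.val ≠ 0 → f c = f d → g c = g d → c = d) ∧
      ∀ c, c.val ≠ 0 → ∀ s : Fin (m + 1), s < g c → ∃ d, d.val ≠ 0 ∧ f d = f c ∧ g d = s := by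
  constructor
  · rintro ⟨hzero, hrank⟩
    refine ⟨fun v hv => ?_, fun c d hc hd hf hg => ?_, fun c hc s hs => ?_⟩
    · rw [← natMap_val, hzero v (by simp [hv])]
    · refine Fin.ext ((hrank (f d)).injOn (mem_children_natMap.2 ⟨c, hc, by rw [hf], rfl⟩)
        (mem_children_natMap.2 ⟨d, hd, rfl, rfl⟩) ?_)
      rw [natMap_val, natMap_val, hg]
    · obtain ⟨_, hd, hds⟩ := (isRanking_iff.1 (hrank (f c))).2 c
        (mem_children_natMap.2 ⟨c, hc, rfl, rfl⟩) s (by rwa [natMap_val])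
      obtain ⟨d, hd0, hdf, rfl⟩ := mem_children_natMap.1 hd
      exact ⟨d, hd0, Fin.ext hdf, Fin.ext (by rw [← hds, natMap_val])⟩
  · rintro ⟨hzero, hinj, hseg⟩
    refine ⟨fun c hc => ?_, fun a => isRanking_iff.2 ⟨fun c hc d hd hcd => ?_, fun c hc i hi => ?_⟩⟩
    · by_cases hcm : m < c
      · exact natMap_eq_zero g hcm
      · lift c to Fin (m + 1) using by omega
        rw [natMap_val, hzero c (by rw [mem_Icc] at hc; omega)]
    · obtain ⟨c, hc0, rfl, rfl⟩ := mem_children_natMap.1 hc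
      obtain ⟨d, hd0, hdc, rfl⟩ := mem_children_natMap.1 hd
      rw [natMap_val, natMap_val] at hcd
      exact congrArg Fin.val (hinj c d hc0 hd0 (Fin.ext hdc.symm) (Fin.ext hcd))
    · obtain ⟨c, hc0, rfl, rfl⟩ := mem_children_natMap.1 hc
      rw [natMap_val] at hi
      obtain ⟨d, hd0, hdc, hdi⟩ := hseg c hc0 ⟨i, hi.trans (g c).isLt⟩ hi
      exact ⟨d, mem_children_natMap.2 ⟨d, hd0, by rw [hdc], rfl⟩, by rw [natMap_val, hdi]⟩

end SiblingRanking

section PlanarTree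

variable {m : ℕ} (T : PlanarTree (m + 1))

lemma isTreeOn_planarTree : IsTreeOn m (natMap T.1.1) := isTreeOn_natMap_iff.2 ⟨T.2.1, T.2.2.1⟩

lemma isSiblingRanking_planarTree : IsSiblingRanking m (natMap T.1.1) (natMap T.1.2) :=
  isSiblingRanking_natMap_iff.2 T.2.2.2

lemma IsTreeOn.exists_planarTree {p r : ℕ → ℕ} (hp : IsTreeOn m p)
    (hr : IsSiblingRanking m p r) :
    ∃ T : PlanarTree (m + 1), natMap T.1.1 = p ∧ natMap T.1.2 = r := by
  obtain ⟨f, rfl⟩ := exists_natMap_eq hp.le hp.map_eq_zero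
  obtain ⟨g, rfl⟩ := exists_natMap_eq hr.le fun v hv =>
    hr.eq_zero v fun h => (mem_Icc.1 h).2.not_gt hv
  obtain ⟨hroot, hreach⟩ := isTreeOn_natMap_iff.1 hp
  exact ⟨⟨(f, g), hroot, hreach, isSiblingRanking_natMap_iff.1 hr⟩, rfl, rfl⟩

open scoped Classical in
/-- The inversion codes identify the planar structures on a tree with the sequences of numbers
`≤ #(smallerSiblings m p c)`, which are chosen independently for all `c`. -/
lemma IsTreeOn.sum_planarTree_prod_siblingCode {R : Type*} [CommSemiring R] {p : ℕ → ℕ}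
    (hp : IsTreeOn m p) (f : ℕ → ℕ → R) :
    ∑ T : PlanarTree (m + 1) with natMap T.1.1 = p,
        ∏ c ∈ Icc 1 m, f c (siblingCode m p (natMap T.1.2) c) =
      ∏ c ∈ Icc 1 m, ∑ i ∈ range (#(smallerSiblings m p c) + 1), f c i := by
  rw [prod_sum]
  refine sum_bij (fun T _ c _ => siblingCode m p (natMap T.1.2) c) (fun T _ => ?_)
    (fun T hT T' hT' h => ?_) (fun g hg => ?_) fun T _ => ?_
  · exact mem_pi.2 fun c _ => mem_range.2 (Nat.lt_succ_of_le (siblingCode_le m p _ c))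
  · have hT := (mem_filter.1 hT).2
    have hT' := (mem_filter.1 hT').2
    have hranks := (hT ▸ isSiblingRanking_planarTree T).eq_of_siblingCode_eq
      (hT' ▸ isSiblingRanking_planarTree T') hp fun c hc => congrFun₂ h c hc
    exact Subtype.ext (Prod.ext (natMap_injective (hT.trans hT'.symm)) (natMap_injective hranks))
  · obtain ⟨r, hr, hcode⟩ := hp.exists_isSiblingRanking
      (e := fun c => if hc : c ∈ Icc 1 m then g c hc else 0) fun c hc => by
        rw [dif_pos hc]
        exact Nat.le_of_lt_succ (mem_range.1 (mem_pi.1 hg c hc))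
    obtain ⟨T, hTp, rfl⟩ := hp.exists_planarTree hr
    refine ⟨T, mem_filter.2 ⟨mem_univ T, hTp⟩, ?_⟩
    funext c hc
    rw [hcode c hc, dif_pos hc]
  · exact (prod_attach (Icc 1 m) fun c => f c (siblingCode m p (natMap T.1.2) c)).symm

lemma beta_planarTree (a : Fin (m + 1)) : T.beta a = minDesc (natMap T.1.1) a :=
  sInf_descendants_eq_minDesc T.1.1 a

lemma elder_planarTree_iff (c : Fin (m + 1)) :
    T.Elder c ↔ c.val ≠ 0 ∧ siblingCode m (natMap T.1.1) (natMap T.1.2) c ≠ 0 := by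
  refine and_congr_right fun _ => ?_
  rw [siblingCode, invCode, ← Nat.pos_iff_ne_zero, card_pos]
  constructor
  · rintro ⟨d, hd0, hdc, hlt, hβ⟩
    rw [beta_planarTree, beta_planarTree] at hβ
    refine ⟨d, mem_filter.2 ⟨mem_children_natMap.2 ⟨d, hd0, ?_, rfl⟩, hβ, ?_⟩⟩
    · rw [natMap_val, hdc]
    · rwa [natMap_val, natMap_val]
  · rintro ⟨_, hd⟩
    obtain ⟨hd, hβ, hlt⟩ := mem_filter.1 hd
    obtain ⟨d, hd0, hdc, rfl⟩ := mem_children_natMap.1 hd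
    rw [natMap_val, natMap_val] at hlt
    rw [natMap_val] at hdc
    exact ⟨d, hd0, Fin.ext hdc, hlt, by rwa [beta_planarTree, beta_planarTree]⟩

lemma eld_planarTree :
    T.eld = #{c ∈ Icc 1 m | ¬siblingCode m (natMap T.1.1) (natMap T.1.2) c = 0} := by
  refine ncard_setOf_eq_card (filter_subset _ _) fun c => ?_
  rw [elder_planarTree_iff, mem_filter, mem_Icc]
  omega

lemma youngRoot_planarTree : T.youngRoot = #{c ∈ {c ∈ Icc 1 m |
    siblingCode m (natMap T.1.1) (natMap T.1.2) c = 0} | natMap T.1.1 c = 0} := by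
  refine ncard_setOf_eq_card ((filter_subset _ _).trans (filter_subset _ _)) fun c => ?_
  rw [elder_planarTree_iff, mem_filter, mem_filter, mem_Icc, natMap_val]
  omega

lemma impe_planarTree : T.impe = #{c ∈ {c ∈ Icc 1 m |
    siblingCode m (natMap T.1.1) (natMap T.1.2) c = 0} |
      minDesc (natMap T.1.1) c < natMap T.1.1 c} := by
  refine ncard_setOf_eq_card ((filter_subset _ _).trans (filter_subset _ _)) fun c => ?_
  rw [PlanarTree.ImproperEdge, elder_planarTree_iff, beta_planarTree, mem_filter, mem_filter,
    mem_Icc, natMap_val]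
  omega

/-- The child of the root with the smallest minimal descendant is younger. -/
lemma youngRoot_planarTree_pos (hm : m ≠ 0) : 0 < T.youngRoot := by
  obtain ⟨c, hc, hmin⟩ := exists_min_image _ (minDesc (natMap T.1.1)) <|
    card_pos.1 ((isTreeOn_planarTree T).card_rootChildren_pos hm)
  obtain ⟨hcm, hc0⟩ := mem_filter.1 hc
  refine youngRoot_planarTree T ▸ card_pos.2 ⟨c, mem_filter.2 ⟨mem_filter.2 ⟨hcm, ?_⟩, hc0⟩⟩
  rw [siblingCode, invCode, hc0, card_eq_zero, filter_eq_empty_iff]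
  exact fun d hd h => (hmin d hd).not_gt h.1

lemma prod_edgeWeight_eq {R : Type*} [CommMonoid R] (p : ℕ → ℕ) (s : Finset ℕ) (x y z : R) :
    ∏ c ∈ s, edgeWeight p x y y z c = x ^ #{c ∈ s | p c = 0} * y ^ #{c ∈ s | minDesc p c < p c} *
      z ^ (#s - #{c ∈ s | minDesc p c < p c} - #{c ∈ s | p c = 0}) := by
  have himp : {c ∈ {c ∈ s | ¬p c = 0} | minDesc p c < p c} = {c ∈ s | minDesc p c < p c} := by
    rw [filter_filter]
    exact filter_congr fun c _ => by omega
  have hroot := card_filter_add_card_filter_not (s := s) fun c => p c = 0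
  have hproper := card_filter_add_card_filter_not (s := {c ∈ s | ¬p c = 0})
    fun c => minDesc p c < p c
  rw [himp] at hproper
  rw [show #s - #{c ∈ s | minDesc p c < p c} - #{c ∈ s | p c = 0} =
    #{c ∈ {c ∈ s | ¬p c = 0} | ¬minDesc p c < p c} by omega]
  simp only [edgeWeight, ite_self, prod_ite, prod_const, himp, mul_assoc]

lemma mul_weight_planarTree {R : Type*} [CommSemiring R] (hm : m ≠ 0) (x y z t : R) :
    x * (y ^ (T.impe + T.eld) * t ^ T.eld * x ^ (T.youngRoot - 1) *
        z ^ (m - T.impe - T.youngRoot - T.eld)) =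
      ∏ c ∈ Icc 1 m, if siblingCode m (natMap T.1.1) (natMap T.1.2) c = 0 then
        edgeWeight (natMap T.1.1) x y y z c else y * t := by
  have hcard := card_filter_add_card_filter_not (s := Icc 1 m)
    fun c => siblingCode m (natMap T.1.1) (natMap T.1.2) c = 0
  rw [← eld_planarTree, Nat.card_Icc, Nat.add_sub_cancel] at hcard
  rw [prod_ite, prod_edgeWeight_eq, prod_const, ← eld_planarTree, ← youngRoot_planarTree,
    ← impe_planarTree, show m - T.impe - T.youngRoot - T.eld =
      #{c ∈ Icc 1 m | siblingCode m (natMap T.1.1) (natMap T.1.2) c = 0} -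
        T.impe - T.youngRoot by omega]
  have hyoung : x ^ T.youngRoot = x * x ^ (T.youngRoot - 1) := by
    rw [← pow_succ', Nat.sub_add_cancel (youngRoot_planarTree_pos T hm)]
  rw [hyoung]
  ring

lemma mul_sum_planarTree {R : Type*} [CommSemiring R] (hm : m ≠ 0) (x y z t : R) :
    x * ∑ T : PlanarTree (m + 1), y ^ (T.impe + T.eld) * t ^ T.eld * x ^ (T.youngRoot - 1) *
      z ^ (m - T.impe - T.youngRoot - T.eld) = treeSum m x y (y + y * t) (z + y * t) := by
  classical
  rw [← sum_prod_edgeWeight_add_smallerSiblings, mul_sum,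
    ← sum_fiberwise_of_maps_to fun T _ => mem_trees.2 (isTreeOn_planarTree T)]
  refine sum_congr rfl fun p hp => ?_
  calc _ = ∑ T : PlanarTree (m + 1) with natMap T.1.1 = p, ∏ c ∈ Icc 1 m,
        (if siblingCode m p (natMap T.1.2) c = 0 then edgeWeight p x y y z c else y * t) := by
        refine sum_congr rfl fun T hT => ?_
        obtain rfl := (mem_filter.1 hT).2
        exact mul_weight_planarTree T hm x y z t
    _ = ∏ c ∈ Icc 1 m, ∑ i ∈ range (#(smallerSiblings m p c) + 1),
        (if i = 0 then edgeWeight p x y y z c else y * t) :=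
      (mem_trees.1 hp).sum_planarTree_prod_siblingCode
        fun c i => if i = 0 then edgeWeight p x y y z c else y * t
    _ = ∏ c ∈ Icc 1 m, (edgeWeight p x y y z c + #(smallerSiblings m p c) * (y * t)) := by
      refine prod_congr rfl fun c _ => ?_
      rw [sum_range_succ', if_pos rfl, add_comm]
      simp only [Nat.succ_ne_zero, if_false, sum_const, card_range, nsmul_eq_mul]

end PlanarTree

end LabelledTree

open LabelledTree in
theorem sum_cayleyTree_eq_sum_planarTree_general {R : Type*} [CommSemiring R] {n : ℕ} (hn : n ≠ 0)
    (x y z t : R) :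
    ∑ T : CayleyTree (n + 1), y ^ T.impe * (t + 1) ^ T.impp * x ^ (T.degRoot - 1) *
        z ^ (T.lead - T.degRoot - 1) =
      ∑ T : PlanarTree (n + 1), y ^ (T.impe + T.eld) * t ^ T.eld * x ^ (T.youngRoot - 1) *
        z ^ (n - T.impe - T.youngRoot - T.eld) := by
  have generic : ∑ T : CayleyTree (n + 1), (X 1 : MvPolynomial (Fin 4) ℕ) ^ T.impe *
        (X 3 + 1) ^ T.impp * X 0 ^ (T.degRoot - 1) * X 2 ^ (T.lead - T.degRoot - 1) =
      ∑ T : PlanarTree (n + 1), X 1 ^ (T.impe + T.eld) * X 3 ^ T.eld * X 0 ^ (T.youngRoot - 1) *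
        X 2 ^ (n - T.impe - T.youngRoot - T.eld) := by
    refine mul_left_cancel₀ (X_ne_zero (R := ℕ) (0 : Fin 4)) ?_
    rw [mul_sum_cayleyTree hn, mul_sum_planarTree hn, ← treeSum_add_swap, mul_add_one, add_comm]
  simpa using congrArg (aeval ![x, y, z, t]) generic

/-- For every `n > 1`, with `x = X 0`, `y = X 1`, `z = X 2`, `t = X 3`,
`Σ_{T ∈ C_{n+1}} y^{impe T} (t+1)^{impp T} x^{deg_T(1)-1} z^{lead T - deg_T(1) - 1}
 = Σ_{T ∈ O_{n+1}} y^{impe T + eld T} t^{eld T} x^{young_T(1)-1}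
     z^{n - impe T - young_T(1) - eld T}`. -/
theorem sum_cayleyTree_eq_sum_planarTree (n : ℕ) (hn : 1 < n) :
    ∑ T : CayleyTree (n + 1),
        (X 1 : MvPolynomial (Fin 4) ℚ) ^ T.impe * (X 3 + 1) ^ T.impp
          * X 0 ^ (T.degRoot - 1) * X 2 ^ (T.lead - T.degRoot - 1)
      = ∑ T : PlanarTree (n + 1),
          (X 1 : MvPolynomial (Fin 4) ℚ) ^ (T.impe + T.eld) * X 3 ^ T.eld
            * X 0 ^ (T.youngRoot - 1) * X 2 ^ (n - T.impe - T.youngRoot - T.eld) := by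
  exact sum_cayleyTree_eq_sum_planarTree_general (by omega) (X 0) (X 1) (X 2) (X 3)

end
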